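/- arXiv:2107.01500 — 3 statements merged into one kernel-verified Lean document; each statement's English description precedes it below -/
import Mathlib

section
/- Let n ≥ 1 and let K be a set of odd integers a with 3 ≤ a ≤ 2n−1 such that any two distinct elements of K differ by at least 4. Then the ideal of C[x1, ..., x_{2n+1}] generated by the polynomials {p_a : a ∈ K}, where p_a = x_{a−2}*x_{a−1} + x_{a+1}*x_{a+2}, is a prime ideal. -/
open MvPolynomial

/-- The variable `x_i` of `ℂ[x₁,…,x_{2n+1}]`, for `1 ≤ i ≤ 2n+1`
(indices are shifted into `Fin (2n+1)`). -/
noncomputable def xv (n i : ℕ) : MvPolynomial (Fin (2 * n + 1)) ℂ :=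
  X ⟨(i - 1) % (2 * n + 1), Nat.mod_lt _ (by omega)⟩

/-- The polynomial `p_a = x_{a-2} x_{a-1} + x_{a+1} x_{a+2}` of `ℂ[x₁,…,x_{2n+1}]`. -/
noncomputable def pv (n a : ℕ) : MvPolynomial (Fin (2 * n + 1)) ℂ :=
  xv n (a - 2) * xv n (a - 1) + xv n (a + 1) * xv n (a + 2)

/-!
Let `I` be a prime ideal generated by polynomials not involving the variables `x` and `y`, and let
`g ∉ I` not involve them either. Then `I + (g + x y)` is prime: over the domain `D = R[σ] / I` the
polynomial `g + X Y` is prime in `D[X][Y]`, because `g` is regular modulo `X`.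

Adjoin the `p_a` in increasing order of `a`. As `K` contains no two consecutive integers, `x_{a+1}`
and `x_{a+2}` do not occur in the earlier `p_b`, and `x_{a-2} x_{a-1}` lies outside the ideal of the
earlier `p_b` because every `p_b` vanishes at each standard basis vector.
-/

section LinearPolynomial

open scoped Polynomial Polynomial.Bivariate

theorem exists_linear_dvd_C_pow_mul_sub_C {A : Type*} [CommRing A] (a b : A) (f : A[X]) :
    ∃ (n : ℕ) (c : A), Polynomial.C a * Polynomial.X + Polynomial.C b ∣
      Polynomial.C a ^ n * f - Polynomial.C c := by
  refine ⟨f.natDegree, (f.scaleRoots a).eval (-b), ?_⟩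
  -- `C a ^ n * f` is a polynomial in `a X`, and `a X ≡ -b` modulo `a X + b`.
  have h := Polynomial.sub_dvd_eval_sub (Polynomial.C a * Polynomial.X) (Polynomial.C (-b))
    ((f.scaleRoots a).map Polynomial.C)
  rwa [Polynomial.eval_map, Polynomial.scaleRoots_eval₂_mul, Polynomial.eval₂_C_X,
    Polynomial.eval_map, Polynomial.eval₂_at_apply, Polynomial.C_neg, sub_neg_eq_add] at h

variable {A : Type*} [CommRing A] [IsDomain A] {a b : A}

theorem linear_dvd_of_dvd_C_pow_mul (ha : a ≠ 0) (hab : ∀ c, a ∣ b * c → a ∣ c) {f : A[X]} (n : ℕ)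
    (h : Polynomial.C a * Polynomial.X + Polynomial.C b ∣ Polynomial.C a ^ n * f) :
    Polynomial.C a * Polynomial.X + Polynomial.C b ∣ f := by
  induction n with
  | zero => simpa only [pow_zero, one_mul] using h
  | succ n ih =>
    obtain ⟨q, hq⟩ := h
    have hbq : Polynomial.C a ∣ Polynomial.C b * q :=
      ⟨Polynomial.C a ^ n * f - Polynomial.X * q, by linear_combination -hq⟩
    obtain ⟨r, rfl⟩ : Polynomial.C a ∣ q := by
      rw [Polynomial.C_dvd_iff_dvd_coeff] at hbq ⊢
      exact fun i => hab _ (by simpa only [Polynomial.coeff_C_mul] using hbq i)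
    refine ih ⟨r, mul_left_cancel₀ (Polynomial.C_ne_zero.2 ha) ?_⟩
    linear_combination hq

theorem prime_C_mul_X_add_C (ha : a ≠ 0) (hab : ∀ c, a ∣ b * c → a ∣ c) :
    Prime (Polynomial.C a * Polynomial.X + Polynomial.C b) := by
  have hdvd {f : A[X]} (n : ℕ) (h : Polynomial.C a * Polynomial.X + Polynomial.C b ∣
      Polynomial.C a ^ n * f - Polynomial.C 0) :
      Polynomial.C a * Polynomial.X + Polynomial.C b ∣ f :=
    linear_dvd_of_dvd_C_pow_mul ha hab n (by rwa [Polynomial.C_0, sub_zero] at h)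
  have hdeg := Polynomial.natDegree_linear (b := b) ha
  set p := Polynomial.C a * Polynomial.X + Polynomial.C b
  refine ⟨Polynomial.ne_zero_of_natDegree_gt (n := 0) (by lia),
    fun hunit => by simp [Polynomial.natDegree_eq_zero_of_isUnit hunit] at hdeg, fun f g hfg => ?_⟩
  obtain ⟨n, c, hc⟩ := exists_linear_dvd_C_pow_mul_sub_C a b f
  obtain ⟨m, d, hd⟩ := exists_linear_dvd_C_pow_mul_sub_C a b g
  have hpcd : p ∣ Polynomial.C (c * d) := by
    have hcomb : Polynomial.C (c * d) = Polynomial.C a ^ (n + m) * (f * g)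
        - (Polynomial.C a ^ n * f - Polynomial.C c) * (Polynomial.C a ^ m * g)
        - Polynomial.C c * (Polynomial.C a ^ m * g - Polynomial.C d) := by
      rw [Polynomial.C_mul]
      ring
    rw [hcomb]
    exact ((hfg.mul_left _).sub (hc.mul_right _)).sub (hd.mul_left _)
  have hcd : c * d = 0 := Polynomial.C_eq_zero.1 <|
    Polynomial.eq_zero_of_dvd_of_natDegree_lt hpcd (by rw [Polynomial.natDegree_C, hdeg]; simp)
  rcases mul_eq_zero.1 hcd with rfl | rfl
  · exact .inl (hdvd n hc)
  · exact .inr (hdvd m hd)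

theorem prime_C_C_add_C_X_mul_X {g : A} (hg : g ≠ 0) :
    Prime (Polynomial.C (Polynomial.C g) + Polynomial.C Polynomial.X * Polynomial.X : A[X][Y]) := by
  rw [add_comm]
  refine prime_C_mul_X_add_C Polynomial.X_ne_zero fun c h => ?_
  simpa only [Polynomial.X_dvd_iff, Polynomial.mul_coeff_zero, Polynomial.coeff_C_zero, mul_eq_zero,
    hg, false_or] using h

end LinearPolynomial

section FreeVariables

open scoped Polynomial Polynomial.Bivariate

variable {σ R D : Type*} [CommRing R] [CommRing D] [Algebra R D]

open Classical in
/-- The modification of `π : R[σ] → D` that sends the variables `x` and `y` to two independent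
indeterminates, the inner and the outer variable of `D[X][Y]`, and every other variable `i` to the
constant `π (X i)`. It serves to recognise ideals of `R[σ]` as preimages of ideals of `D[X][Y]`. -/
noncomputable def freeVars (π : MvPolynomial σ R →ₐ[R] D) (x y : σ) :
    MvPolynomial σ R →ₐ[R] D[X][Y] :=
  aeval fun i => if i = y then Polynomial.X else if i = x then Polynomial.C Polynomial.X
    else Polynomial.C (Polynomial.C (π (X i)))

variable (π : MvPolynomial σ R →ₐ[R] D) {x y : σ}

theorem freeVars_X_left (hxy : x ≠ y) : freeVars π x y (X x) = Polynomial.C Polynomial.X := by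
  rw [freeVars, aeval_X, if_neg hxy, if_pos rfl]

theorem freeVars_X_right : freeVars π x y (X y) = Polynomial.X := by
  rw [freeVars, aeval_X, if_pos rfl]

theorem freeVars_of_mem_supported {f : MvPolynomial σ R}
    (hf : f ∈ supported R ({x, y}ᶜ : Set σ)) :
    freeVars π x y f = Polynomial.C (Polynomial.C (π f)) := by
  let ψ : MvPolynomial σ R →ₐ[R] D[X][Y] :=
    (Polynomial.CAlgHom.comp Polynomial.CAlgHom).comp π
  refine AlgHom.adjoin_le_equalizer (freeVars π x y) ψ (Set.forall_mem_image.2 fun i hi => ?_) hf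
  rw [Set.mem_compl_iff, Set.mem_insert_iff, Set.mem_singleton_iff, not_or] at hi
  rw [freeVars, aeval_X, if_neg hi.2, if_neg hi.1]
  rfl

theorem evalEval_freeVars (x y : σ) (f : MvPolynomial σ R) :
    (freeVars π x y f).evalEval (π (X x)) (π (X y)) = π f := by
  have h : (Polynomial.evalEvalRingHom (π (X x)) (π (X y))).comp (freeVars π x y).toRingHom
      = π.toRingHom := by
    refine ringHom_ext (fun r => ?_) fun i => ?_
    · have hr : freeVars π x y (C r) = Polynomial.C (Polynomial.C (π (C r))) := by
        rw [← algebraMap_eq, AlgHom.commutes, AlgHom.commutes]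
        rfl
      simp [hr]
    · by_cases hy : i = y
      · simp [hy, freeVars_X_right]
      · rcases eq_or_ne i x with rfl | hx
        · simp [freeVars_X_left π hy]
        · simp [freeVars, hx, hy]
  exact RingHom.congr_fun h f

theorem span_insert_add_X_mul_X_eq_comap_freeVars (hπ : Function.Surjective π) (hxy : x ≠ y)
    {T : Set (MvPolynomial σ R)} {g : MvPolynomial σ R} (hker : RingHom.ker π = Ideal.span T)
    (hT : T ⊆ supported R ({x, y}ᶜ : Set σ)) (hg : g ∈ supported R ({x, y}ᶜ : Set σ)) :
    Ideal.span (insert (g + X x * X y) T) =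
      (Ideal.span {Polynomial.C (Polynomial.C (π g)) + Polynomial.C Polynomial.X * Polynomial.X}
        ).comap (freeVars π x y) := by
  have hmap : freeVars π x y (g + X x * X y) =
      Polynomial.C (Polynomial.C (π g)) + Polynomial.C Polynomial.X * Polynomial.X := by
    rw [map_add, map_mul, freeVars_of_mem_supported π hg, freeVars_X_left π hxy, freeVars_X_right]
  rw [← hmap]
  apply le_antisymm
  · rw [Ideal.span_le, Set.insert_subset_iff]
    refine ⟨Ideal.mem_comap.2 (Ideal.mem_span_singleton_self _), fun t ht => ?_⟩
    have hπt : π t = 0 := RingHom.mem_ker.1 (hker ▸ Ideal.subset_span ht)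
    rw [SetLike.mem_coe, Ideal.mem_comap, freeVars_of_mem_supported π (hT ht), hπt,
      Polynomial.C_0, Polynomial.C_0]
    exact Ideal.zero_mem _
  · intro f hf
    -- Specialising the two indeterminates turns the divisibility into one in `D`.
    have hdvd : π (g + X x * X y) ∣ π f := by
      rw [← evalEval_freeVars π x y, ← evalEval_freeVars π x y f]
      exact Polynomial.evalEval_dvd _ _ (Ideal.mem_span_singleton.1 hf)
    obtain ⟨r, hr⟩ := hdvd
    obtain ⟨q, rfl⟩ := hπ r
    have hmem : f - q * (g + X x * X y) ∈ Ideal.span T := by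
      rw [← hker, RingHom.mem_ker, map_sub, map_mul, hr, mul_comm, sub_self]
    exact Ideal.mem_span_insert.2 ⟨q, _, hmem, (add_sub_cancel _ f).symm⟩

theorem isPrime_span_insert_add_X_mul_X (hxy : x ≠ y) {T : Set (MvPolynomial σ R)}
    {g : MvPolynomial σ R} (hT : T ⊆ supported R ({x, y}ᶜ : Set σ))
    (hg : g ∈ supported R ({x, y}ᶜ : Set σ)) (hprime : (Ideal.span T).IsPrime)
    (hgT : g ∉ Ideal.span T) : (Ideal.span (insert (g + X x * X y) T)).IsPrime := by
  rw [span_insert_add_X_mul_X_eq_comap_freeVars (Ideal.Quotient.mkₐ R (Ideal.span T))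
    (Ideal.Quotient.mkₐ_surjective R _) hxy (Ideal.Quotient.mkₐ_ker R _) hT hg]
  have hg0 : Ideal.Quotient.mkₐ R (Ideal.span T) g ≠ 0 := mt Ideal.Quotient.eq_zero_iff_mem.1 hgT
  have hp := prime_C_C_add_C_X_mul_X hg0
  have := (Ideal.span_singleton_prime hp.ne_zero).2 hp
  exact Ideal.comap_isPrime _ _

end FreeVariables

section Indices

variable {n : ℕ}

/-- The element of `Fin (2 * n + 1)` that stands for the index `i` of the variable `x_i`. Only
`1 ≤ i ≤ 2 * n + 1` is meaningful: `i - 1` truncates at `0` and is reduced modulo `2 * n + 1`. -/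
def varIndex (n i : ℕ) : Fin (2 * n + 1) :=
  Fin.ofNat (2 * n + 1) (i - 1)

theorem xv_eq_X_varIndex (n i : ℕ) : xv n i = X (varIndex n i) := rfl

theorem varIndex_ne_of_lt {i j : ℕ} (hi : 1 ≤ i) (hij : i < j) (hj : j ≤ 2 * n + 1) :
    varIndex n i ≠ varIndex n j := by
  rw [Ne, Fin.ext_iff, varIndex, varIndex, Fin.val_ofNat, Fin.val_ofNat,
    Nat.mod_eq_of_lt (by lia), Nat.mod_eq_of_lt (by lia)]
  lia

theorem xv_mem_supported {i b : ℕ} (hi : 1 ≤ i) (hib : i ≤ b) (hb : b + 2 ≤ 2 * n + 1) :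
    xv n i ∈ supported ℂ ({varIndex n (b + 1), varIndex n (b + 2)}ᶜ : Set (Fin (2 * n + 1))) := by
  rw [xv_eq_X_varIndex, X_mem_supported, Set.mem_compl_iff, Set.mem_insert_iff,
    Set.mem_singleton_iff, not_or]
  exact ⟨varIndex_ne_of_lt hi (by lia) (by lia), varIndex_ne_of_lt hi (by lia) hb⟩

theorem pv_mem_supported {a b : ℕ} (ha : 3 ≤ a) (hab : a + 2 ≤ b) (hb : b + 2 ≤ 2 * n + 1) :
    pv n a ∈ supported ℂ ({varIndex n (b + 1), varIndex n (b + 2)}ᶜ : Set (Fin (2 * n + 1))) :=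
  add_mem
    (mul_mem (xv_mem_supported (by lia) (by lia) hb) (xv_mem_supported (by lia) (by lia) hb))
    (mul_mem (xv_mem_supported (by lia) (by lia) hb) (xv_mem_supported (by lia) (by lia) hb))

theorem eval_single_xv_mul_xv {i j : ℕ} (hi : 1 ≤ i) (hij : i < j) (hj : j ≤ 2 * n + 1)
    (k : Fin (2 * n + 1)) : eval (Pi.single k 1) (xv n i * xv n j) = 0 := by
  have hne := varIndex_ne_of_lt hi hij hj
  rw [xv_eq_X_varIndex, xv_eq_X_varIndex, map_mul, eval_X, eval_X, mul_eq_zero,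
    Pi.single_apply, Pi.single_apply]
  by_cases hk : varIndex n i = k
  · exact .inr (if_neg fun h => hne (hk.trans h.symm))
  · exact .inl (if_neg hk)

theorem X_notMem_span_pv {K : Set ℕ} (hbd : ∀ a ∈ K, 3 ≤ a ∧ a ≤ 2 * n - 1)
    (k : Fin (2 * n + 1)) : X k ∉ Ideal.span ((fun a => pv n a) '' K) := by
  have hle : Ideal.span ((fun a => pv n a) '' K) ≤ RingHom.ker (eval (Pi.single k (1 : ℂ))) := by
    rw [Ideal.span_le, Set.image_subset_iff]
    intro a ha
    obtain ⟨ha3, han⟩ := hbd a ha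
    rw [Set.mem_preimage, SetLike.mem_coe, RingHom.mem_ker, pv, map_add,
      eval_single_xv_mul_xv (by lia) (by lia) (by lia),
      eval_single_xv_mul_xv (by lia) (by lia) (by lia), add_zero]
  intro hk
  simpa using RingHom.mem_ker.1 (hle hk)

theorem isPrime_span_pv_insert {K : Set ℕ} {a : ℕ} (ha : 3 ≤ a ∧ a ≤ 2 * n - 1)
    (hK : ∀ b ∈ K, 3 ≤ b ∧ b + 2 ≤ a) (hprime : (Ideal.span ((fun b => pv n b) '' K)).IsPrime) :
    (Ideal.span ((fun b => pv n b) '' insert a K)).IsPrime := by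
  have hbd : ∀ b ∈ K, 3 ≤ b ∧ b ≤ 2 * n - 1 := fun b hb => by have := hK b hb; lia
  rw [Set.image_insert_eq]
  refine isPrime_span_insert_add_X_mul_X (varIndex_ne_of_lt (by lia) (by lia) (by lia)) ?_ ?_
    hprime ?_
  · exact Set.image_subset_iff.2 fun b hb => pv_mem_supported (hK b hb).1 (hK b hb).2 (by lia)
  · exact mul_mem (xv_mem_supported (by lia) (by lia) (by lia))
      (xv_mem_supported (by lia) (by lia) (by lia))
  · exact hprime.mul_notMem (X_notMem_span_pv hbd _) (X_notMem_span_pv hbd _)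

end Indices

theorem span_p_isPrime_general (n : ℕ) (K : Set ℕ)
    (hbd : ∀ a ∈ K, 3 ≤ a ∧ a ≤ 2 * n - 1) (hgap : ∀ a ∈ K, a + 1 ∉ K) :
    (Ideal.span ((fun a => pv n a) '' K)).IsPrime := by
  have hfin : K.Finite := (Set.finite_Iic (2 * n - 1)).subset fun a ha => (hbd a ha).2
  obtain ⟨s, rfl⟩ := hfin.exists_finset_coe
  induction s using Finset.induction_on_max with
  | empty => simpa using Ideal.isPrime_bot
  | insert a s hlt ih =>
    rw [Finset.coe_insert] at hbd hgap ⊢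
    refine isPrime_span_pv_insert (hbd a (Set.mem_insert a s)) (fun b hb => ?_)
      (ih (fun b hb => hbd b (.inr hb)) (fun b hb hb' => hgap b (.inr hb) (.inr hb'))
        s.finite_toSet)
    have hba : b + 1 ≠ a := fun h => hgap b (.inr hb) (.inl h)
    have := hlt b hb
    exact ⟨(hbd b (.inr hb)).1, by lia⟩

/-- Let `n ≥ 1` and let `K` be a set of odd integers `a` with `3 ≤ a ≤ 2n−1` such that
any two distinct elements of `K` differ by at least `4`.  Then the ideal of
`ℂ[x₁,…,x_{2n+1}]` generated by the polynomials `p_a = x_{a−2}x_{a−1} + x_{a+1}x_{a+2}`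
for `a ∈ K` is a prime ideal. -/
theorem span_p_isPrime (n : ℕ) (hn : 1 ≤ n) (K : Set ℕ)
    (hodd : ∀ a ∈ K, Odd a)
    (hbd : ∀ a ∈ K, 3 ≤ a ∧ a ≤ 2 * n - 1)
    (hsep : ∀ a ∈ K, ∀ b ∈ K, a ≠ b → a + 4 ≤ b ∨ b + 4 ≤ a) :
    (Ideal.span ((fun a => pv n a) '' K)).IsPrime :=
  span_p_isPrime_general n K hbd fun a ha ha' =>
    Nat.not_even_iff_odd.2 (hodd (a + 1) ha') (hodd a ha).add_one
end

section
/- For every n ≥ 3, the nullvariety V_0 ⊆ C^{2n+1} of P_n^3 equals the union, over all S ∈ F̂_n and all S-admissible sets B, of the common zero sets Z(B) ⊆ C^{2n+1} of B. Moreover each such Z(B) is the zero locus of a prime ideal of C[x1, ..., x_{2n+1}], and for any two distinct admissible sets B ≠ B' arising from sets S, S' ∈ F̂_n, neither Z(B) ⊆ Z(B') nor Z(B') ⊆ Z(B). Hence these Z(B) are exactly the irreducible components of V_0. -/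
open MvPolynomial

/-- `A'_n = {3, 5, 7, …, 2n−1}`, the odd numbers between `3` and `2n−1`. -/
def Aset' (n : ℕ) : Finset ℕ :=
  (Finset.range (2 * n)).filter (fun a => a % 2 = 1 ∧ 3 ≤ a)

/-- `A_n = A'_n \ {3, 2n−1}`. -/
def Aset (n : ℕ) : Finset ℕ :=
  (Aset' n).filter (fun a => a ≠ 3 ∧ a ≠ 2 * n - 1)

/-- `S` is a Fibonacci subset of `A'_n`: for every `1 ≤ j ≤ n−2`,
`2j+1 ∈ S` or `2j+3 ∈ S`. -/
def IsFib (n : ℕ) (S : Finset ℕ) : Prop :=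
  S ⊆ Aset' n ∧ ∀ j, 1 ≤ j → j ≤ n - 2 → (2 * j + 1 ∈ S ∨ 2 * j + 3 ∈ S)

/-- `U1 = {x_i : i ∈ S}`. -/
noncomputable def U1 (n : ℕ) (S : Finset ℕ) : Finset (MvPolynomial (Fin (2 * n + 1)) ℂ) :=
  S.image (xv n)

/-- The allowable choices of `U2`. -/
def U2ok (n : ℕ) (S : Finset ℕ) (U : Finset (MvPolynomial (Fin (2 * n + 1)) ℂ)) : Prop :=
  (3 ∉ S ∧ 5 ∈ S ∧ U = {xv n 1, xv n 2}) ∨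
  (3 ∈ S ∧ 5 ∈ S ∧ (U = {xv n 1} ∨ U = {xv n 2})) ∨
  (3 ∈ S ∧ 5 ∉ S ∧ U = {pv n 3})

/-- The allowable choices of `U3`. -/
def U3ok (n : ℕ) (S : Finset ℕ) (U : Finset (MvPolynomial (Fin (2 * n + 1)) ℂ)) : Prop :=
  (2 * n - 1 ∉ S ∧ 2 * n - 3 ∈ S ∧ U = {xv n (2 * n), xv n (2 * n + 1)}) ∨
  (2 * n - 3 ∈ S ∧ 2 * n - 1 ∈ S ∧ (U = {xv n (2 * n)} ∨ U = {xv n (2 * n + 1)})) ∨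
  (2 * n - 1 ∈ S ∧ 2 * n - 3 ∉ S ∧ U = {pv n (2 * n - 1)})

/-- The contribution `T_a` to `U4` for `a ∈ A_n`. -/
noncomputable def Tpart (n : ℕ) (S : Finset ℕ) (a : ℕ) :
    Finset (MvPolynomial (Fin (2 * n + 1)) ℂ) :=
  if a - 2 ∈ S then (if a + 2 ∈ S then ∅ else {xv n (a + 1)})
  else (if a + 2 ∈ S then {xv n (a - 1)} else {pv n a})

/-- `U4 = ⋃_{a ∈ A_n} T_a`. -/
noncomputable def U4 (n : ℕ) (S : Finset ℕ) : Finset (MvPolynomial (Fin (2 * n + 1)) ℂ) :=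
  (Aset n).biUnion (Tpart n S)

/-- `B` is an `S`-admissible set: `B = U1 ∪ U2 ∪ U3 ∪ U4` for some allowable `U2, U3`. -/
def IsAdmissible (n : ℕ) (S : Finset ℕ) (B : Finset (MvPolynomial (Fin (2 * n + 1)) ℂ)) :
    Prop :=
  ∃ U2 U3, U2ok n S U2 ∧ U3ok n S U3 ∧ B = U1 n S ∪ U2 ∪ U3 ∪ U4 n S

/-- Every maximal run of consecutive elements of `A'_n` contained in `S` has
cardinality `1` or even cardinality. -/
def GoodRuns (S : Finset ℕ) : Prop :=
  ∀ a m : ℕ, 1 ≤ m → (∀ i < m, a + 2 * i ∈ S) → a - 2 ∉ S → a + 2 * m ∉ S →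
    (m = 1 ∨ Even m)

/-- The common zero set in `ℂ^{2n+1}` of a set of polynomials. -/
def Zset (n : ℕ) (B : Finset (MvPolynomial (Fin (2 * n + 1)) ℂ)) :
    Set (Fin (2 * n + 1) → ℂ) :=
  {z | ∀ q ∈ B, eval z q = 0}

/-- The nullvariety of `P_n^3`: the common zero set of the `2n+1` link polynomials
`x₂x₃`, `x_{2j−1}x_{2j+1}` for `1 ≤ j ≤ n`, `x_{2j−1}x_{2j} + x_{2j+2}x_{2j+3}` for
`1 ≤ j ≤ n−1`, and `x_{2n−1}x_{2n}`. -/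
def nullVariety (n : ℕ) : Set (Fin (2 * n + 1) → ℂ) :=
  {z | eval z (xv n 2 * xv n 3) = 0 ∧
       eval z (xv n (2 * n - 1) * xv n (2 * n)) = 0 ∧
       (∀ j, 1 ≤ j → j ≤ n → eval z (xv n (2 * j - 1) * xv n (2 * j + 1)) = 0) ∧
       (∀ j, 1 ≤ j → j ≤ n - 1 →
          eval z (xv n (2 * j - 1) * xv n (2 * j) + xv n (2 * j + 2) * xv n (2 * j + 3)) = 0)}

/-! By the equations `x_{2j-1} x_{2j+1} = 0`, the set `D` of all `j` with `x_{2j-1} ≠ 0` has no two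
consecutive elements at a point of the nullvariety. Points with a given `D` satisfy the equations
that remain of the links: `x_{2j} = 0` if `j ∈ D` but `j + 2 ∉ D`, and so on. Let `Z_D` be the zero
set of these and of the `x_{2j-1}` with `j ∉ D`. Then the nullvariety is the union of the `Z_D`.

Writing `o_j = x_{2j-1}`, `e_j = x_{2j}`, the only binomial equations defining `Z_D` are
`o_j e_j + e_{j+1} o_{j+2} = 0` for `j, j + 2 ∈ D`. They are solved by
`(e_j, e_{j+1}) = t_j (o_{j+2}, -o_j)`, which parametrizes `Z_D` except where `o_j = o_{j+2} = 0`.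
Every point of `Z_D` is nevertheless a limit of parametrized ones, so the polynomials vanishing on
`Z_D` form the kernel of a homomorphism between polynomial rings, a prime ideal.

Finally `Z_D ⊆ Z_{D'}` holds exactly if `D ⊆ D'` and `D' \ D` consists of every other element of
some of the gaps of `D`, from the second element of the gap to the last but one. Gaps of odd length
at least `3` are the ones that can be filled in this way, so `Z_D` is maximal exactly if `D` has no
such gap. The equations of these `Z_D` are the admissible sets. -/

section Coordinates

variable {n : ℕ}

/-- The coordinate `x_{2j-1}` of a point of `ℂ^{2n+1}`, the `j`-th odd coordinate. It is extended
by `0` outside `1 ≤ j ≤ n + 1`, so that the link polynomials of the two end vertices of the path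
take the same form as those of the inner ones. -/
noncomputable def oddCoord (z : Fin (2 * n + 1) → ℂ) (j : ℕ) : ℂ :=
  if 1 ≤ j ∧ j ≤ n + 1 then eval z (xv n (2 * j - 1)) else 0

/-- The coordinate `x_{2j}` of a point of `ℂ^{2n+1}`, the `j`-th even coordinate, extended by `0`
outside `1 ≤ j ≤ n`. -/
noncomputable def evenCoord (z : Fin (2 * n + 1) → ℂ) (j : ℕ) : ℂ :=
  if 1 ≤ j ∧ j ≤ n then eval z (xv n (2 * j)) else 0

/-- The tuple `(x₁, …, x_{2n+1})` with odd coordinates `x_{2j-1} = o j` and even coordinates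
`x_{2j} = e j`. -/
def ofCoords {R : Type*} (n : ℕ) (o e : ℕ → R) (k : Fin (2 * n + 1)) : R :=
  if k.val % 2 = 0 then o (k.val / 2 + 1) else e ((k.val + 1) / 2)

theorem oddCoord_of_mem {z : Fin (2 * n + 1) → ℂ} {j : ℕ} (hj : 1 ≤ j) (hjn : j ≤ n + 1) :
    oddCoord z j = eval z (xv n (2 * j - 1)) :=
  if_pos ⟨hj, hjn⟩

theorem evenCoord_of_mem {z : Fin (2 * n + 1) → ℂ} {j : ℕ} (hj : 1 ≤ j) (hjn : j ≤ n) :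
    evenCoord z j = eval z (xv n (2 * j)) :=
  if_pos ⟨hj, hjn⟩

@[simp]
theorem oddCoord_zero (z : Fin (2 * n + 1) → ℂ) : oddCoord z 0 = 0 := by
  simp [oddCoord]

@[simp]
theorem evenCoord_zero (z : Fin (2 * n + 1) → ℂ) : evenCoord z 0 = 0 := by
  simp [evenCoord]

theorem oddCoord_of_lt (z : Fin (2 * n + 1) → ℂ) {j : ℕ} (hj : n + 1 < j) : oddCoord z j = 0 :=
  if_neg (by omega)

theorem evenCoord_of_lt (z : Fin (2 * n + 1) → ℂ) {j : ℕ} (hj : n < j) : evenCoord z j = 0 :=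
  if_neg (by omega)

theorem oddCoord_ofCoords (o e : ℕ → ℂ) (j : ℕ) :
    oddCoord (ofCoords n o e) j = if 1 ≤ j ∧ j ≤ n + 1 then o j else 0 := by
  unfold oddCoord
  refine ite_congr rfl (fun hj => ?_) fun _ => rfl
  have hlt : 2 * j - 1 - 1 < 2 * n + 1 := by omega
  simp only [xv, eval_X, ofCoords, Nat.mod_eq_of_lt hlt]
  rw [if_pos (by omega), show (2 * j - 1 - 1) / 2 + 1 = j by omega]

theorem evenCoord_ofCoords (o e : ℕ → ℂ) (j : ℕ) :
    evenCoord (ofCoords n o e) j = if 1 ≤ j ∧ j ≤ n then e j else 0 := by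
  unfold evenCoord
  refine ite_congr rfl (fun hj => ?_) fun _ => rfl
  have hlt : 2 * j - 1 < 2 * n + 1 := by omega
  simp only [xv, eval_X, ofCoords, Nat.mod_eq_of_lt hlt]
  rw [if_neg (by omega), show (2 * j - 1 + 1) / 2 = j by omega]

theorem ofCoords_oddCoord_evenCoord (z : Fin (2 * n + 1) → ℂ) :
    ofCoords n (oddCoord z) (evenCoord z) = z := by
  funext k
  have hk := k.isLt
  rcases Nat.mod_two_eq_zero_or_one k.val with hpar | hpar
  · have hidx : 2 * (k.val / 2 + 1) - 1 - 1 = k.val := by omega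
    rw [ofCoords, if_pos hpar, oddCoord_of_mem (by omega) (by omega)]
    simp only [xv, eval_X, hidx, Nat.mod_eq_of_lt hk]
  · have hidx : 2 * ((k.val + 1) / 2) - 1 = k.val := by omega
    rw [ofCoords, if_neg (by omega), evenCoord_of_mem (by omega) (by omega)]
    simp only [xv, eval_X, hidx, Nat.mod_eq_of_lt hk]

theorem eval_pv {z : Fin (2 * n + 1) → ℂ} {j : ℕ} (hj : 1 ≤ j) (hjn : j + 1 ≤ n) :
    eval z (pv n (2 * j + 1)) =
      oddCoord z j * evenCoord z j + evenCoord z (j + 1) * oddCoord z (j + 2) := by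
  rw [pv, map_add, map_mul, map_mul, oddCoord_of_mem hj (by omega),
    evenCoord_of_mem hj (by omega), evenCoord_of_mem (by omega) hjn,
    oddCoord_of_mem (by omega) (by omega)]
  congr 4

/-- In the zero-extended coordinates, `j = 0` and `j = n` give the monomial links `x₂x₃` and
`x_{2n-1}x_{2n}` of the two end vertices. -/
theorem mem_nullVariety_iff {z : Fin (2 * n + 1) → ℂ} (hn : 1 ≤ n) :
    z ∈ nullVariety n ↔ ∀ j, oddCoord z j * oddCoord z (j + 1) = 0 ∧
      oddCoord z j * evenCoord z j + evenCoord z (j + 1) * oddCoord z (j + 2) = 0 := by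
  have hmul : ∀ j, 1 ≤ j → j ≤ n →
      eval z (xv n (2 * j - 1) * xv n (2 * j + 1)) = oddCoord z j * oddCoord z (j + 1) := by
    intro j hj hjn
    rw [map_mul, oddCoord_of_mem hj (by omega), oddCoord_of_mem (by omega) (by omega)]
    rfl
  have hleft : eval z (xv n 2 * xv n 3) =
      oddCoord z 0 * evenCoord z 0 + evenCoord z 1 * oddCoord z 2 := by
    rw [oddCoord_zero, zero_mul, zero_add, map_mul, evenCoord_of_mem le_rfl hn,
      oddCoord_of_mem (by omega) (by omega)]
  have hright : eval z (xv n (2 * n - 1) * xv n (2 * n)) =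
      oddCoord z n * evenCoord z n + evenCoord z (n + 1) * oddCoord z (n + 2) := by
    rw [evenCoord_of_lt z n.lt_succ_self, zero_mul, add_zero, map_mul,
      oddCoord_of_mem hn (by omega), evenCoord_of_mem hn le_rfl]
  constructor
  · rintro ⟨h2, h2n, hodd, hlink⟩ j
    refine ⟨?_, ?_⟩
    · rcases Nat.eq_zero_or_pos j with rfl | hj
      · simp
      rcases le_or_gt j n with hjn | hjn
      · exact hmul j hj hjn ▸ hodd j hj hjn
      · rw [oddCoord_of_lt z (by omega : n + 1 < j + 1), mul_zero]
    · rcases Nat.eq_zero_or_pos j with rfl | hj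
      · exact hleft ▸ h2
      rcases lt_trichotomy j n with hjn | rfl | hjn
      · exact eval_pv hj hjn ▸ hlink j hj (by omega)
      · exact hright ▸ h2n
      · rw [evenCoord_of_lt z hjn, oddCoord_of_lt z (by omega : n + 1 < j + 2), mul_zero,
          mul_zero, add_zero]
  · intro h
    exact ⟨hleft ▸ (h 0).2, hright ▸ (h n).2, fun j hj hjn => hmul j hj hjn ▸ (h j).1,
      fun j hj hjn => (eval_pv hj (by omega)).trans (h j).2⟩

end Coordinates

section Supports

variable {n : ℕ}

/-- A set `D` of indices is sparse if it can be the support `{j | x_{2j-1} ≠ 0}` of the odd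
coordinates of a point of the nullvariety: it lies in `{1, …, n + 1}` and has no two consecutive
elements. The Fibonacci subsets are the sets `{2j - 1 | j ∉ D}`, cut down to `A'_n`. -/
structure IsSparse (n : ℕ) (D : Finset ℕ) : Prop where
  subset_Icc : D ⊆ Finset.Icc 1 (n + 1)
  succ_notMem : ∀ j ∈ D, j + 1 ∉ D

theorem IsSparse.pos {D : Finset ℕ} (hD : IsSparse n D) {j : ℕ} (hj : j ∈ D) : 1 ≤ j :=
  (Finset.mem_Icc.mp (hD.subset_Icc hj)).1

theorem IsSparse.le {D : Finset ℕ} (hD : IsSparse n D) {j : ℕ} (hj : j ∈ D) : j ≤ n + 1 :=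
  (Finset.mem_Icc.mp (hD.subset_Icc hj)).2

/-- What remains of the link polynomial of the vertex `v_{2j+1}` once the odd coordinates outside
`D` vanish. A monomial `x_{2j-1}x_{2j}` with `j ∈ D` contributes only its factor `x_{2j}`. -/
noncomputable def linkGens (n : ℕ) (D : Finset ℕ) (j : ℕ) :
    Finset (MvPolynomial (Fin (2 * n + 1)) ℂ) :=
  if j ∈ D then (if j + 2 ∈ D then {pv n (2 * j + 1)} else {xv n (2 * j)})
  else (if j + 2 ∈ D then {xv n (2 * j + 2)} else ∅)

/-- The generators cutting out the closure of the points of the nullvariety whose odd coordinates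
have support `D`. These are the admissible sets, indexed by `D`. -/
noncomputable def supportGens (n : ℕ) (D : Finset ℕ) :
    Finset (MvPolynomial (Fin (2 * n + 1)) ℂ) :=
  (Finset.Icc 1 (n + 1) \ D).image (fun j => xv n (2 * j - 1)) ∪
    (Finset.range (n + 1)).biUnion (linkGens n D)

/-- The equations of `Zset n (supportGens n D)` in terms of the zero-extended coordinates. -/
structure IsSupportedOn (D : Finset ℕ) (z : Fin (2 * n + 1) → ℂ) : Prop where
  odd : ∀ j ∉ D, oddCoord z j = 0
  even : ∀ j ∈ D, j + 2 ∉ D → evenCoord z j = 0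
  even_succ : ∀ j ∉ D, j + 2 ∈ D → evenCoord z (j + 1) = 0
  link : ∀ j ∈ D, j + 2 ∈ D →
    oddCoord z j * evenCoord z j + evenCoord z (j + 1) * oddCoord z (j + 2) = 0

theorem isSupportedOn_of_mem_zset {D : Finset ℕ} (hD : D ⊆ Finset.Icc 1 (n + 1))
    {z : Fin (2 * n + 1) → ℂ} (hz : z ∈ Zset n (supportGens n D)) : IsSupportedOn D z := by
  have hle : ∀ j ∈ D, 1 ≤ j ∧ j ≤ n + 1 := fun j hj => Finset.mem_Icc.mp (hD hj)
  have hodd : ∀ j ∉ D, 1 ≤ j → j ≤ n + 1 → eval z (xv n (2 * j - 1)) = 0 := by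
    intro j hj h1 h2
    exact hz _ (Finset.mem_union_left _ (Finset.mem_image_of_mem _
      (Finset.mem_sdiff.mpr ⟨Finset.mem_Icc.mpr ⟨h1, h2⟩, hj⟩)))
  have hlink : ∀ j, j ≤ n → ∀ q ∈ linkGens n D j, eval z q = 0 := by
    intro j hj q hq
    exact hz q (Finset.mem_union_right _
      (Finset.mem_biUnion.mpr ⟨j, Finset.mem_range.mpr (by omega), hq⟩))
  refine ⟨fun j hj => ?_, fun j hj hj2 => ?_, fun j hj hj2 => ?_, fun j hj hj2 => ?_⟩
  · by_cases hr : 1 ≤ j ∧ j ≤ n + 1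
    · rw [oddCoord_of_mem hr.1 hr.2, hodd j hj hr.1 hr.2]
    · exact if_neg hr
  · rcases le_or_gt j n with hjn | hjn
    · rw [evenCoord_of_mem (hle j hj).1 hjn]
      exact hlink j hjn _ (by simp [linkGens, hj, hj2])
    · exact evenCoord_of_lt z hjn
  · have := hle _ hj2
    rw [evenCoord_of_mem (by omega) (by omega)]
    exact hlink j (by omega) _ (by simp [linkGens, hj, hj2, mul_add])
  · have := hle _ hj2
    rw [← eval_pv (hle j hj).1 (by omega)]
    exact hlink j (by omega) _ (by simp [linkGens, hj, hj2])

theorem IsSupportedOn.mem_zset {D : Finset ℕ} (hD : D ⊆ Finset.Icc 1 (n + 1))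
    {z : Fin (2 * n + 1) → ℂ} (hz : IsSupportedOn D z) : z ∈ Zset n (supportGens n D) := by
  have hle : ∀ j ∈ D, 1 ≤ j ∧ j ≤ n + 1 := fun j hj => Finset.mem_Icc.mp (hD hj)
  intro q hq
  rcases Finset.mem_union.mp hq with hq | hq
  · obtain ⟨j, hj, rfl⟩ := Finset.mem_image.mp hq
    obtain ⟨hjI, hjD⟩ := Finset.mem_sdiff.mp hj
    obtain ⟨h1, h2⟩ := Finset.mem_Icc.mp hjI
    exact (oddCoord_of_mem h1 h2).symm.trans (hz.odd j hjD)
  · obtain ⟨j, hj, hq⟩ := Finset.mem_biUnion.mp hq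
    have hjn : j ≤ n := Nat.lt_succ_iff.mp (Finset.mem_range.mp hj)
    unfold linkGens at hq
    split_ifs at hq with hjD hj2 hj2
    · have := hle _ hj2
      rw [Finset.mem_singleton.mp hq, eval_pv (hle j hjD).1 (by omega), hz.link j hjD hj2]
    · rw [Finset.mem_singleton.mp hq, ← evenCoord_of_mem (hle j hjD).1 hjn,
        hz.even j hjD hj2]
    · have := hle _ hj2
      rw [Finset.mem_singleton.mp hq, ← mul_add_one,
        ← evenCoord_of_mem (by omega) (by omega), hz.even_succ j hjD hj2]
    · exact absurd hq (Finset.notMem_empty q)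

theorem mem_zset_supportGens_iff {D : Finset ℕ} (hD : D ⊆ Finset.Icc 1 (n + 1))
    {z : Fin (2 * n + 1) → ℂ} : z ∈ Zset n (supportGens n D) ↔ IsSupportedOn D z :=
  ⟨isSupportedOn_of_mem_zset hD, IsSupportedOn.mem_zset hD⟩

theorem IsSparse.zset_subset_nullVariety {D : Finset ℕ} (hD : IsSparse n D) (hn : 1 ≤ n) :
    Zset n (supportGens n D) ⊆ nullVariety n := by
  intro z hz
  obtain ⟨hodd, heven, heven_succ, hlink⟩ := (mem_zset_supportGens_iff hD.subset_Icc).mp hz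
  refine (mem_nullVariety_iff hn).mpr fun j => ⟨?_, ?_⟩
  · by_cases hj : j ∈ D
    · rw [hodd _ (hD.succ_notMem j hj), mul_zero]
    · rw [hodd j hj, zero_mul]
  · by_cases hj : j ∈ D <;> by_cases hj2 : j + 2 ∈ D
    · exact hlink j hj hj2
    · rw [heven j hj hj2, hodd _ hj2, mul_zero, mul_zero, add_zero]
    · rw [hodd j hj, heven_succ j hj hj2, zero_mul, zero_mul, add_zero]
    · rw [hodd j hj, hodd _ hj2, zero_mul, mul_zero, add_zero]

theorem exists_isSparse_of_mem_nullVariety {z : Fin (2 * n + 1) → ℂ} (hz : z ∈ nullVariety n)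
    (hn : 1 ≤ n) : ∃ D, IsSparse n D ∧ z ∈ Zset n (supportGens n D) := by
  have hV := (mem_nullVariety_iff hn).mp hz
  set D := (Finset.Icc 1 (n + 1)).filter fun j => oddCoord z j ≠ 0 with hDdef
  have hsub : D ⊆ Finset.Icc 1 (n + 1) := Finset.filter_subset _ _
  have hodd : ∀ j ∉ D, oddCoord z j = 0 := by
    intro j hj
    by_cases hr : 1 ≤ j ∧ j ≤ n + 1
    · simpa only [hDdef, Finset.mem_filter, Finset.mem_Icc, hr, and_self, true_and,
        not_not] using hj
    · exact if_neg hr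
  have hne : ∀ j ∈ D, oddCoord z j ≠ 0 := fun j hj => (Finset.mem_filter.mp hj).2
  refine ⟨D, ⟨hsub, fun j hj hj1 => mul_ne_zero (hne j hj) (hne _ hj1) (hV j).1⟩,
    (mem_zset_supportGens_iff hsub).mpr
      ⟨hodd, fun j hj hj2 => ?_, fun j hj hj2 => ?_, fun j _ _ => (hV j).2⟩⟩
  · have h := (hV j).2
    rw [hodd _ hj2, mul_zero, add_zero] at h
    exact (mul_eq_zero.mp h).resolve_left (hne j hj)
  · have h := (hV j).2
    rw [hodd j hj, zero_mul, zero_add] at h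
    exact (mul_eq_zero.mp h).resolve_right (hne _ hj2)

end Supports

section Gaps

variable {n : ℕ} {D D' : Finset ℕ}

/-- `D'` enlarges `D` by every other index of some of its gaps, from the second index of the gap to
the last but one. This is the combinatorial form of the inclusion
`Zset n (supportGens n D) ⊆ Zset n (supportGens n D')`. -/
structure FillsGaps (n : ℕ) (D D' : Finset ℕ) : Prop where
  subset : D ⊆ D'
  next : ∀ j ≤ n, j ∈ D' → j ∉ D → j + 1 ∉ D → j + 2 ∈ D'
  prev : ∀ j, j + 2 ∈ D' → j + 2 ∉ D → j + 1 ∉ D → j ∈ D'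

theorem IsSupportedOn.of_fillsGaps {z : Fin (2 * n + 1) → ℂ} (hz : IsSupportedOn D z)
    (hD' : IsSparse n D') (h : FillsGaps n D D') : IsSupportedOn D' z := by
  have hodd : ∀ j ∉ D', oddCoord z j = 0 := fun j hj => hz.odd j fun hjD => hj (h.subset hjD)
  have hsucc : ∀ j ∈ D', j + 1 ∉ D := fun j hj hj1 => hD'.succ_notMem j hj (h.subset hj1)
  have hpred : ∀ j, j + 1 ∈ D' → j ∉ D := fun j hj1 hj => hD'.succ_notMem j (h.subset hj) hj1
  refine ⟨hodd, fun j hj hj2 => ?_, fun j hj hj2 => ?_, fun j _ _ => ?_⟩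
  · by_cases hjD : j ∈ D
    · exact hz.even j hjD fun hj2D => hj2 (h.subset hj2D)
    · rcases le_or_gt j n with hjn | hjn
      · exact absurd (h.next j hjn hj hjD (hsucc j hj)) hj2
      · exact evenCoord_of_lt z hjn
  · by_cases hj2D : j + 2 ∈ D
    · exact hz.even_succ j (fun hjD => hj (h.subset hjD)) hj2D
    · exact absurd (h.prev j hj2 hj2D (hpred _ hj2)) hj
  · by_cases hjD : j ∈ D <;> by_cases hj2D : j + 2 ∈ D
    · exact hz.link j hjD hj2D
    · rw [hz.even j hjD hj2D, hz.odd _ hj2D, mul_zero, mul_zero, add_zero]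
    · rw [hz.odd j hjD, hz.even_succ j hjD hj2D, zero_mul, zero_mul, add_zero]
    · rw [hz.odd j hjD, hz.odd _ hj2D, zero_mul, mul_zero, add_zero]

theorem FillsGaps.zset_subset (h : FillsGaps n D D') (hD' : IsSparse n D') :
    Zset n (supportGens n D) ⊆ Zset n (supportGens n D') := fun _ hz =>
  (mem_zset_supportGens_iff hD'.subset_Icc).mpr
    (((mem_zset_supportGens_iff (h.subset.trans hD'.subset_Icc)).mp hz).of_fillsGaps hD' h)

theorem isSupportedOn_oddSingle {j : ℕ} (hj : j ∈ D) :
    IsSupportedOn D (ofCoords n (Pi.single j 1) 0) := by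
  refine ⟨fun i hi => ?_, fun i _ _ => ?_, fun i _ _ => ?_, fun i _ _ => ?_⟩
  · have hij : i ≠ j := fun hij => hi (hij ▸ hj)
    simp [oddCoord_ofCoords, hij]
  all_goals simp [evenCoord_ofCoords]

theorem isSupportedOn_evenSingle {j : ℕ} (hj : j ∉ D) (hj1 : j + 1 ∉ D) :
    IsSupportedOn D (ofCoords n 0 (Pi.single j 1)) := by
  refine ⟨fun i _ => ?_, fun i hi _ => ?_, fun i _ hi2 => ?_, fun i _ _ => ?_⟩
  · simp [oddCoord_ofCoords]
  · have hij : i ≠ j := fun hij => hj (hij ▸ hi)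
    simp [evenCoord_ofCoords, hij]
  · have hij : i + 1 ≠ j := fun hij => hj1 (hij ▸ hi2)
    simp [evenCoord_ofCoords, hij]
  · simp [oddCoord_ofCoords]

theorem fillsGaps_of_zset_subset (hD : D ⊆ Finset.Icc 1 (n + 1))
    (hD' : D' ⊆ Finset.Icc 1 (n + 1))
    (h : Zset n (supportGens n D) ⊆ Zset n (supportGens n D')) : FillsGaps n D D' := by
  have himp : ∀ z : Fin (2 * n + 1) → ℂ, IsSupportedOn D z → IsSupportedOn D' z := fun z hz =>
    (mem_zset_supportGens_iff hD').mp (h ((mem_zset_supportGens_iff hD).mpr hz))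
  refine ⟨fun j hj => ?_, fun j hjn hj hjD hj1 => ?_, fun j hj2 hj2D hj1 => ?_⟩
  · by_contra hjD'
    have hzero := (himp _ (isSupportedOn_oddSingle hj)).odd j hjD'
    rw [oddCoord_ofCoords, if_pos (Finset.mem_Icc.mp (hD hj)), Pi.single_eq_same] at hzero
    exact one_ne_zero hzero
  · by_contra hj2
    have hzero := (himp _ (isSupportedOn_evenSingle hjD hj1)).even j hj hj2
    rw [evenCoord_ofCoords, if_pos ⟨(Finset.mem_Icc.mp (hD' hj)).1, hjn⟩,
      Pi.single_eq_same] at hzero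
    exact one_ne_zero hzero
  · by_contra hj
    have hle := (Finset.mem_Icc.mp (hD' hj2)).2
    have hzero := (himp _ (isSupportedOn_evenSingle hj1 hj2D)).even_succ j hj hj2
    rw [evenCoord_ofCoords, if_pos (by omega), Pi.single_eq_same] at hzero
    exact one_ne_zero hzero

/-- `{a, …, b - 1}` is a maximal interval of `{0, …, n + 2}` disjoint from `D`. The two extra
indices `0` and `n + 2` account for the vanishing of the zero-extended coordinates. -/
structure IsGap (n : ℕ) (D : Finset ℕ) (a b : ℕ) : Prop where
  lt : a < b
  le : b ≤ n + 3
  notMem : ∀ j, a ≤ j → j < b → j ∉ D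
  left : ∀ c, c + 1 = a → c ∈ D
  right : b = n + 3 ∨ b ∈ D

/-- Every gap has length `1` or even length: the counterpart for `D` of the condition defining
`F̂_n`. -/
def HasGoodGaps (n : ℕ) (D : Finset ℕ) : Prop :=
  ∀ a b, IsGap n D a b → b = a + 1 ∨ Even (b - a)

theorem exists_isGap {d : ℕ} (hd : d ∉ D) (hdn : d ≤ n + 2) :
    ∃ a b, IsGap n D a b ∧ a ≤ d ∧ d < b := by
  classical
  have ha : ∃ a, ∀ j, a ≤ j → j ≤ d → j ∉ D :=
    ⟨d, fun j hdj hjd => le_antisymm hjd hdj ▸ hd⟩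
  have hb : ∃ b, d < b ∧ (b = n + 3 ∨ b ∈ D) := ⟨n + 3, by omega, Or.inl rfl⟩
  have had : Nat.find ha ≤ d := Nat.find_min' ha fun j hdj hjd => le_antisymm hjd hdj ▸ hd
  obtain ⟨hdb, hbD⟩ := Nat.find_spec hb
  refine ⟨Nat.find ha, Nat.find hb,
    ⟨had.trans_lt hdb, Nat.find_min' hb ⟨by omega, Or.inl rfl⟩, fun j haj hjb => ?_,
      fun c hc => ?_, hbD⟩, had, hdb⟩
  · rcases le_or_gt j d with hjd | hdj
    · exact Nat.find_spec ha j haj hjd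
    · exact fun hj => Nat.find_min hb hjb ⟨hdj, Or.inr hj⟩
  · by_contra hcD
    refine Nat.find_min ha (m := c) (by omega) fun j hcj hjd => ?_
    rcases hcj.eq_or_lt with rfl | hlt
    · exact hcD
    · exact Nat.find_spec ha j (by omega) hjd

/-- An element of `D' \ D` in a gap propagates in steps of two to both ends of the gap, and
must miss the outermost indices there. -/
theorem FillsGaps.even_sub_and_odd_sub (h : FillsGaps n D D') (hD' : IsSparse n D') {a b d : ℕ}
    (hgap : IsGap n D a b) (had : a ≤ d) (hdb : d < b) (hd : d ∈ D') :
    Even (b - d) ∧ Odd (d - a) := by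
  have hright : ∀ k, d + 2 * k < b → d + 2 * k ∈ D' := by
    intro k
    induction k with
    | zero => exact fun _ => hd
    | succ k ih =>
      intro hk
      have hb := hgap.le
      exact h.next (d + 2 * k) (by omega) (ih (by omega)) (hgap.notMem _ (by omega) (by omega))
        (hgap.notMem _ (by omega) (by omega))
  have hleft : ∀ k j, j + 2 * k = d → a ≤ j → j ∈ D' := by
    intro k
    induction k with
    | zero => exact fun j hj _ => (show d = j from hj.symm) ▸ hd
    | succ k ih =>
      intro j hj haj
      exact h.prev j (ih (j + 2) (by omega) (by omega))
        (hgap.notMem _ (by omega) (by omega)) (hgap.notMem _ (by omega) (by omega))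
  constructor
  · by_contra hodd
    obtain ⟨k, hk⟩ := Nat.not_even_iff_odd.mp hodd
    have hlast := hright k (by omega)
    rcases hgap.right with hb | hb
    · have := hD'.le hlast
      omega
    · exact hD'.succ_notMem _ hlast (h.subset (by rwa [show d + 2 * k + 1 = b by omega]))
  · by_contra heven
    obtain ⟨k, hk⟩ := Nat.not_odd_iff_even.mp heven
    have hfirst := hleft k a (by omega) le_rfl
    have hpos := hD'.pos hfirst
    have hpred := hgap.left (a - 1) (by omega)
    exact hD'.succ_notMem _ (h.subset hpred) (by rwa [Nat.sub_add_cancel hpos])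

theorem HasGoodGaps.eq_of_fillsGaps (hgood : HasGoodGaps n D) (hD' : IsSparse n D')
    (h : FillsGaps n D D') : D = D' := by
  refine h.subset.antisymm fun d hd => ?_
  by_contra hdD
  have hdn := hD'.le hd
  obtain ⟨a, b, hgap, had, hdb⟩ := exists_isGap hdD (by omega : d ≤ n + 2)
  obtain ⟨⟨k, hk⟩, ⟨l, hl⟩⟩ := h.even_sub_and_odd_sub hD' hgap had hdb hd
  rcases hgood a b hgap with hab | ⟨m, hm⟩ <;> omega

theorem HasGoodGaps.eq_of_zset_subset (hgood : HasGoodGaps n D) (hD : IsSparse n D)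
    (hD' : IsSparse n D') (h : Zset n (supportGens n D) ⊆ Zset n (supportGens n D')) : D = D' :=
  hgood.eq_of_fillsGaps hD' (fillsGaps_of_zset_subset hD.subset_Icc hD'.subset_Icc h)

theorem exists_fillsGaps_ssubset_of_not_hasGoodGaps (hD : IsSparse n D)
    (hbad : ¬ HasGoodGaps n D) : ∃ D', IsSparse n D' ∧ FillsGaps n D D' ∧ D ⊂ D' := by
  obtain ⟨a, b, hgap, hne, hodd⟩ : ∃ a b, IsGap n D a b ∧ b ≠ a + 1 ∧ Odd (b - a) := by
    simpa only [HasGoodGaps, not_forall, not_or, exists_prop, Nat.not_even_iff_odd] using hbad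
  obtain ⟨k, hk⟩ := hodd
  obtain ⟨hab, hbn, hnotMem, hleft, hright⟩ := hgap
  set D' := D ∪ (Finset.Ioo a (b - 1)).filter (fun j => j % 2 ≠ a % 2) with hD'def
  have hmem : ∀ j, j ∈ D' ↔ j ∈ D ∨ a < j ∧ j + 1 < b ∧ j % 2 ≠ a % 2 := by
    intro j
    rw [hD'def, Finset.mem_union, Finset.mem_filter, Finset.mem_Ioo, Nat.lt_sub_iff_add_lt,
      and_assoc]
  refine ⟨D', ⟨fun j hj => ?_, fun j hj hj1 => ?_⟩,
    ⟨Finset.subset_union_left, fun j hjn hj hjD _ => ?_, fun j hj2 hj2D _ => ?_⟩,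
    Finset.ssubset_iff_subset_ne.mpr ⟨Finset.subset_union_left, fun heq => ?_⟩⟩
  · rcases (hmem j).mp hj with hj | hj
    · exact hD.subset_Icc hj
    · exact Finset.mem_Icc.mpr (by omega)
  · rcases (hmem _).mp hj with hj | hj <;> rcases (hmem _).mp hj1 with hj1 | hj1
    · exact hD.succ_notMem j hj hj1
    · exact hnotMem j (by omega) (by omega) hj
    · exact hnotMem _ (by omega) (by omega) hj1
    · omega
  · have hnew := ((hmem j).mp hj).resolve_left hjD
    by_cases hj2b : j + 2 = b
    · exact (hmem _).mpr (Or.inl (hj2b ▸ hright.resolve_left (by omega)))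
    · exact (hmem _).mpr (Or.inr (by omega))
  · have hnew := ((hmem _).mp hj2).resolve_left hj2D
    by_cases hja : j + 1 = a
    · exact (hmem j).mpr (Or.inl (hleft j hja))
    · exact (hmem j).mpr (Or.inr (by omega))
  · have hnew : a + 1 ∈ D' := (hmem _).mpr (Or.inr (by omega))
    exact hnotMem (a + 1) (by omega) (by omega) (heq ▸ hnew)

theorem IsSparse.exists_hasGoodGaps_zset_subset (hD : IsSparse n D) :
    ∃ D', IsSparse n D' ∧ HasGoodGaps n D' ∧
      Zset n (supportGens n D) ⊆ Zset n (supportGens n D') := by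
  have hfin : {E | IsSparse n E ∧ Zset n (supportGens n D) ⊆ Zset n (supportGens n E)}.Finite :=
    (Finset.Icc 1 (n + 1)).powerset.finite_toSet.subset fun E hE =>
      Finset.mem_coe.mpr (Finset.mem_powerset.mpr hE.1.subset_Icc)
  obtain ⟨E, ⟨hE, hDE⟩, hmax⟩ := hfin.exists_maximal ⟨D, hD, subset_rfl⟩
  refine ⟨E, hE, ?_, hDE⟩
  by_contra hbad
  obtain ⟨E', hE', hfill, hlt⟩ := exists_fillsGaps_ssubset_of_not_hasGoodGaps hE hbad
  exact hlt.not_subset (hmax ⟨hE', hDE.trans (hfill.zset_subset hE')⟩ hlt.subset)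

end Gaps

section Parametrization

open Filter Topology

/-- The ideal is the kernel of the homomorphism of polynomial rings induced by the
parametrization `g`. -/
theorem exists_isPrime_of_subset_closure_range {σ τ k : Type*} [Field k] [Infinite k]
    [TopologicalSpace k] [IsTopologicalSemiring k] [T1Space k] (g : σ → MvPolynomial τ k)
    (B : Set (MvPolynomial σ k))
    (hrange : ∀ w, ∀ q ∈ B, eval (fun i => eval w (g i)) q = 0)
    (hdense : {z | ∀ q ∈ B, eval z q = 0} ⊆ closure (Set.range fun w i => eval w (g i))) :
    ∃ I : Ideal (MvPolynomial σ k), I.IsPrime ∧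
      {z | ∀ q ∈ B, eval z q = 0} = {z | ∀ q ∈ I, eval z q = 0} := by
  have heval : ∀ w q, eval w (bind₁ g q) = eval (fun i => eval w (g i)) q := fun w q => by
    rw [← coe_aeval_eq_eval, ← coe_aeval_eq_eval, RingHom.coe_coe, RingHom.coe_coe, aeval_bind₁]
  refine ⟨RingHom.ker (bind₁ g), RingHom.ker_isPrime _, Set.Subset.antisymm ?_ ?_⟩
  · intro z hz q hq
    have hclosed : IsClosed {x | eval x q = 0} :=
      isClosed_singleton.preimage (MvPolynomial.continuous_eval q)
    refine closure_minimal ?_ hclosed (hdense hz)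
    rintro _ ⟨w, rfl⟩
    exact (heval w q).symm.trans (by rw [(RingHom.mem_ker).mp hq, map_zero])
  · intro z hz q hq
    refine hz q (RingHom.mem_ker.mpr (MvPolynomial.funext fun w => ?_))
    rw [heval, hrange w q hq, map_zero]

variable {n : ℕ} {D : Finset ℕ}

/-- The even coordinates of the parametrized points with odd support in `D`: if `j, j + 2 ∈ D`,
the solutions of `o_j e_j + e_{j+1} o_{j+2} = 0` are written `e_j = t_j o_{j+2}`,
`e_{j+1} = -t_j o_j`, and an even coordinate not occurring in any equation is free. -/
def paramEven {R : Type*} [CommRing R] (D : Finset ℕ) (o t : ℕ → R) : ℕ → R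
  | 0 => 0
  | i + 1 => if i + 1 ∈ D then t (i + 1) * o (i + 3)
      else if i + 2 ∈ D then -(t i * o i) else t (i + 1)

theorem map_paramEven {R S : Type*} [CommRing R] [CommRing S] (φ : R →+* S) (D : Finset ℕ)
    (o t : ℕ → R) (j : ℕ) :
    φ (paramEven D o t j) = paramEven D (fun i => φ (o i)) (fun i => φ (t i)) j := by
  cases j with
  | zero => exact map_zero φ
  | succ i => simp only [paramEven, apply_ite φ, map_mul, map_neg]

theorem IsSparse.isSupportedOn_paramEven (hD : IsSparse n D) {o t : ℕ → ℂ}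
    (ho : ∀ j ∉ D, o j = 0) : IsSupportedOn D (ofCoords n o (paramEven D o t)) := by
  refine ⟨fun j hj => ?_, fun j hj hj2 => ?_, fun j hj hj2 => ?_, fun j hj hj2 => ?_⟩
  · rw [oddCoord_ofCoords, ho j hj, ite_self]
  · obtain ⟨i, rfl⟩ := Nat.exists_eq_add_of_le' (hD.pos hj)
    rw [evenCoord_ofCoords, paramEven, if_pos hj, ho _ hj2, mul_zero, ite_self]
  · have hj1 : j + 1 ∉ D := fun h => hD.succ_notMem _ h hj2
    rw [evenCoord_ofCoords, paramEven, if_neg hj1, if_pos hj2, ho j hj, mul_zero, neg_zero,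
      ite_self]
  · obtain ⟨i, rfl⟩ := Nat.exists_eq_add_of_le' (hD.pos hj)
    have hj1 := hD.succ_notMem _ hj
    have hle := hD.le hj2
    rw [oddCoord_ofCoords, oddCoord_ofCoords, evenCoord_ofCoords, evenCoord_ofCoords,
      if_pos (by omega), if_pos (by omega), if_pos (by omega), if_pos (by omega), paramEven,
      paramEven, if_pos hj, if_neg hj1, if_pos hj2]
    ring

theorem tendsto_ofCoords {ι R : Type*} [TopologicalSpace R] {l : Filter ι} {O E : ι → ℕ → R}
    {o e : ℕ → R} (hO : ∀ j, Tendsto (fun s => O s j) l (𝓝 (o j)))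
    (hE : ∀ j, Tendsto (fun s => E s j) l (𝓝 (e j))) :
    Tendsto (fun s => ofCoords n (O s) (E s)) l (𝓝 (ofCoords n o e)) := by
  refine tendsto_pi_nhds.mpr fun k => ?_
  unfold ofCoords
  split_ifs
  exacts [hO _, hE _]

theorem tendsto_paramEven {ι : Type*} {l : Filter ι} {O T : ι → ℕ → ℂ}
    {e : ℕ → ℂ} (he0 : e 0 = 0)
    (hfirst : ∀ j ∈ D, Tendsto (fun s => T s j * O s (j + 2)) l (𝓝 (e j)))
    (hsecond : ∀ j, j + 2 ∈ D → Tendsto (fun s => -(T s j * O s j)) l (𝓝 (e (j + 1))))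
    (hfree : ∀ j ∉ D, Tendsto (fun s => T s j) l (𝓝 (e j))) (j : ℕ) :
    Tendsto (fun s => paramEven D (O s) (T s) j) l (𝓝 (e j)) := by
  cases j with
  | zero => exact he0 ▸ tendsto_const_nhds
  | succ i =>
    simp only [paramEven]
    split_ifs with h1 h2
    exacts [hfirst _ h1, hsecond i h2, hfree _ h1]

/-- A solution `c = balance P u v` of the equations `c_j u_j + v_j c_{j+2} = 0`, `j ∈ P`, all of
whose values are nonzero as soon as those of `u` and `v` are. -/
def balance {R : Type*} [CommRing R] (P : Finset ℕ) (u v : ℕ → R) (j : ℕ) : R :=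
  ∏ i ∈ P, if i < j then -u i else v i

theorem balance_mul_add_mul_balance {R : Type*} [CommRing R] {P : Finset ℕ} (u v : ℕ → R)
    {j : ℕ} (hj : j ∈ P) (hj1 : j + 1 ∉ P) :
    balance P u v j * u j + v j * balance P u v (j + 2) = 0 := by
  have hrest : ∏ i ∈ P.erase j, (if i < j + 2 then -u i else v i) =
      ∏ i ∈ P.erase j, if i < j then -u i else v i := by
    refine Finset.prod_congr rfl fun i hi => ?_
    obtain ⟨hij, hiP⟩ := Finset.mem_erase.mp hi
    have hij1 : i ≠ j + 1 := fun h => hj1 (h ▸ hiP)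
    exact if_congr (by omega) rfl rfl
  rw [balance, balance, ← Finset.mul_prod_erase P _ hj, ← Finset.mul_prod_erase P _ hj, hrest,
    if_neg (lt_irrefl j), if_pos (by omega)]
  ring

theorem balance_ne_zero {R : Type*} [CommRing R] [IsDomain R] {P : Finset ℕ} {u v : ℕ → R}
    (hu : ∀ i ∈ P, u i ≠ 0) (hv : ∀ i ∈ P, v i ≠ 0) (j : ℕ) : balance P u v j ≠ 0 := by
  refine Finset.prod_ne_zero_iff.mpr fun i hi => ?_
  split_ifs
  exacts [neg_ne_zero.mpr (hu i hi), hv i hi]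

/-- The indices at which `o_j e_j + e_{j+1} o_{j+2} = 0` holds because both odd coordinates
vanish. There `(e_j, e_{j+1})` need not be a multiple of `(o_{j+2}, -o_j)`, so the point may fail to
be parametrized. -/
noncomputable def degenerateLinks (D : Finset ℕ) (z : Fin (2 * n + 1) → ℂ) : Finset ℕ :=
  D.filter fun j => j + 2 ∈ D ∧ oddCoord z j = 0 ∧ oddCoord z (j + 2) = 0

theorem mem_degenerateLinks {z : Fin (2 * n + 1) → ℂ} {j : ℕ} : j ∈ degenerateLinks D z ↔
    j ∈ D ∧ j + 2 ∈ D ∧ oddCoord z j = 0 ∧ oddCoord z (j + 2) = 0 :=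
  Finset.mem_filter

theorem IsSupportedOn.exists_slope {z : Fin (2 * n + 1) → ℂ} (hz : IsSupportedOn D z) {j : ℕ}
    (hnd : j ∉ degenerateLinks D z) : ∃ t : ℂ, (j ∉ D → t = evenCoord z j) ∧
      (j ∈ D → t * oddCoord z (j + 2) = evenCoord z j) ∧
      (j + 2 ∈ D → -(t * oddCoord z j) = evenCoord z (j + 1)) := by
  by_cases hj : j ∈ D
  swap
  · refine ⟨evenCoord z j, fun _ => rfl, fun h => absurd h hj, fun hj2 => ?_⟩
    rw [hz.odd j hj, hz.even_succ j hj hj2, mul_zero, neg_zero]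
  by_cases hj2 : j + 2 ∈ D
  swap
  · refine ⟨0, fun h => absurd hj h, fun _ => ?_, fun h => absurd h hj2⟩
    rw [hz.even j hj hj2, zero_mul]
  have hlink := hz.link j hj hj2
  by_cases ho : oddCoord z j = 0
  · have ho2 : oddCoord z (j + 2) ≠ 0 := fun ho2 =>
      hnd (mem_degenerateLinks.mpr ⟨hj, hj2, ho, ho2⟩)
    refine ⟨evenCoord z j / oddCoord z (j + 2), fun h => absurd hj h,
      fun _ => div_mul_cancel₀ _ ho2, fun _ => ?_⟩
    rw [ho, zero_mul, zero_add] at hlink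
    rw [ho, mul_zero, neg_zero, (mul_eq_zero.mp hlink).resolve_right ho2]
  · refine ⟨-evenCoord z (j + 1) / oddCoord z j, fun h => absurd hj h, fun _ => ?_,
      fun _ => by rw [div_mul_cancel₀ _ ho, neg_neg]⟩
    field_simp
    linear_combination -hlink

theorem tendsto_add_nhdsNE (a : ℂ) : Tendsto (fun s => a + s) (𝓝[≠] 0) (𝓝 a) := by
  have hlim : Tendsto (fun s : ℂ => a + s) (𝓝 0) (𝓝 (a + 0)) := tendsto_const_nhds.add tendsto_id
  rw [add_zero] at hlim
  exact hlim.mono_left nhdsWithin_le_nhds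

theorem eventually_nhdsNE_add_ne_zero (a : ℂ) : ∀ᶠ s in 𝓝[≠] (0 : ℂ), a + s ≠ 0 := by
  by_cases ha : a = 0
  · simp only [ha, zero_add]
    exact self_mem_nhdsWithin
  · exact (tendsto_add_nhdsNE a).eventually_ne ha

/-- The odd coordinates are moved along `o_j + s c_j`, with `c` chosen so that at the degenerate
links the equation holds with `e_j + s`, `e_{j+1} + s` in place of `e_j`, `e_{j+1}`. -/
theorem IsSupportedOn.exists_oddCoord_curve {z : Fin (2 * n + 1) → ℂ} (hz : IsSupportedOn D z)
    (hD : IsSparse n D) : ∃ O : ℂ → ℕ → ℂ, (∀ s, ∀ j ∉ D, O s j = 0) ∧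
      (∀ j, Tendsto (fun s => O s j) (𝓝[≠] 0) (𝓝 (oddCoord z j))) ∧
      (∀ j ∈ degenerateLinks D z, ∀ s,
        O s j * (evenCoord z j + s) + (evenCoord z (j + 1) + s) * O s (j + 2) = 0) ∧
      ∀ᶠ s in 𝓝[≠] 0, ∀ j ∈ degenerateLinks D z, O s (j + 2) ≠ 0 := by
  set P := degenerateLinks D z
  set c : ℂ → ℕ → ℂ := fun s =>
    balance P (fun i => evenCoord z i + s) (fun i => evenCoord z (i + 1) + s) with hc
  have hcont : ∀ j, Continuous fun s => oddCoord z j + s * c s j := by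
    intro j
    simp only [hc, balance]
    refine continuous_const.add (continuous_id.mul (continuous_finsetProd _ fun i _ => ?_))
    split_ifs <;> fun_prop
  refine ⟨fun s j => if j ∈ D then oddCoord z j + s * c s j else 0, fun s j hj => if_neg hj,
    fun j => ?_, fun j hj s => ?_, ?_⟩
  · by_cases hj : j ∈ D <;> simp only [hj, if_true, if_false]
    · have hlim := ((hcont j).tendsto 0).mono_left (nhdsWithin_le_nhds (s := {0}ᶜ))
      rwa [zero_mul, add_zero] at hlim
    · exact hz.odd j hj ▸ tendsto_const_nhds
  · obtain ⟨hjD, hj2D, ho, ho2⟩ := mem_degenerateLinks.mp hj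
    have hbal := balance_mul_add_mul_balance (fun i => evenCoord z i + s)
      (fun i => evenCoord z (i + 1) + s) hj
      fun h => hD.succ_notMem j hjD (mem_degenerateLinks.mp h).1
    simp only [if_pos hjD, if_pos hj2D, ho, ho2]
    linear_combination s * hbal
  · have hu := (Finset.eventually_all P).mpr fun i _ =>
      eventually_nhdsNE_add_ne_zero (evenCoord z i)
    have hv := (Finset.eventually_all P).mpr fun i _ =>
      eventually_nhdsNE_add_ne_zero (evenCoord z (i + 1))
    filter_upwards [self_mem_nhdsWithin, hu, hv] with s hs hus hvs j hj
    obtain ⟨-, hj2D, -, ho2⟩ := mem_degenerateLinks.mp hj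
    rw [if_pos hj2D, ho2, zero_add]
    exact mul_ne_zero hs (balance_ne_zero hus hvs _)

theorem IsSupportedOn.exists_slope_curve {z : Fin (2 * n + 1) → ℂ} (hz : IsSupportedOn D z)
    {O : ℂ → ℕ → ℂ} (hO : ∀ j, Tendsto (fun s => O s j) (𝓝[≠] 0) (𝓝 (oddCoord z j)))
    (hlink : ∀ j ∈ degenerateLinks D z, ∀ s,
      O s j * (evenCoord z j + s) + (evenCoord z (j + 1) + s) * O s (j + 2) = 0)
    (hne : ∀ᶠ s in 𝓝[≠] 0, ∀ j ∈ degenerateLinks D z, O s (j + 2) ≠ 0) (j : ℕ) :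
    ∃ T : ℂ → ℂ, (j ∉ D → Tendsto T (𝓝[≠] 0) (𝓝 (evenCoord z j))) ∧
      (j ∈ D → Tendsto (fun s => T s * O s (j + 2)) (𝓝[≠] 0) (𝓝 (evenCoord z j))) ∧
      (j + 2 ∈ D → Tendsto (fun s => -(T s * O s j)) (𝓝[≠] 0) (𝓝 (evenCoord z (j + 1)))) := by
  by_cases hj : j ∈ degenerateLinks D z
  · refine ⟨fun s => (evenCoord z j + s) / O s (j + 2),
      fun h => absurd (mem_degenerateLinks.mp hj).1 h,
      fun _ => (tendsto_add_nhdsNE _).congr' ?_, fun _ => (tendsto_add_nhdsNE _).congr' ?_⟩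
    · filter_upwards [hne] with s hs
      rw [div_mul_cancel₀ _ (hs j hj)]
    · filter_upwards [hne] with s hs
      have hs2 := hs j hj
      field_simp
      linear_combination hlink j hj s
  · obtain ⟨t, hfree, hfirst, hsecond⟩ := hz.exists_slope hj
    exact ⟨fun _ => t, fun h => hfree h ▸ tendsto_const_nhds,
      fun h => hfirst h ▸ tendsto_const_nhds.mul (hO _),
      fun h => hsecond h ▸ (tendsto_const_nhds.mul (hO _)).neg⟩

theorem IsSupportedOn.mem_closure_paramEven {z : Fin (2 * n + 1) → ℂ} (hz : IsSupportedOn D z)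
    (hD : IsSparse n D) :
    z ∈ closure {x | ∃ o t : ℕ → ℂ, (∀ j ∉ D, o j = 0) ∧ ofCoords n o (paramEven D o t) = x} := by
  obtain ⟨O, hzero, hO, hlink, hne⟩ := hz.exists_oddCoord_curve hD
  choose T hfree hfirst hsecond using hz.exists_slope_curve hO hlink hne
  have hlim := tendsto_ofCoords (n := n) hO
    (tendsto_paramEven (T := fun s j => T j s) (evenCoord_zero z) hfirst hsecond hfree)
  rw [ofCoords_oddCoord_evenCoord] at hlim
  exact mem_closure_of_tendsto hlim
    (Eventually.of_forall fun s => ⟨O s, fun j => T j s, hzero s, rfl⟩)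

theorem IsSparse.exists_isPrime_zset_eq (hD : IsSparse n D) :
    ∃ I : Ideal (MvPolynomial (Fin (2 * n + 1)) ℂ), I.IsPrime ∧
      Zset n (supportGens n D) = {z | ∀ q ∈ I, eval z q = 0} := by
  set o : ℕ → MvPolynomial (ℕ ⊕ ℕ) ℂ := fun j => if j ∈ D then X (Sum.inl j) else 0 with ho
  set t : ℕ → MvPolynomial (ℕ ⊕ ℕ) ℂ := fun j => X (Sum.inr j) with ht
  have heval : ∀ w, (fun i => eval w (ofCoords n o (paramEven D o t) i)) =
      ofCoords n (fun j => eval w (o j))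
        (paramEven D (fun j => eval w (o j)) fun j => eval w (t j)) := by
    intro w
    funext i
    simp only [ofCoords, apply_ite (eval w), map_paramEven]
  refine exists_isPrime_of_subset_closure_range (ofCoords n o (paramEven D o t))
    (supportGens n D) (fun w => ?_) fun z hz => ?_
  · rw [heval]
    exact (hD.isSupportedOn_paramEven fun j hj => by simp [ho, hj]).mem_zset hD.subset_Icc
  · refine closure_mono ?_
      ((isSupportedOn_of_mem_zset hD.subset_Icc hz).mem_closure_paramEven hD)
    rintro _ ⟨o', t', ho', rfl⟩
    refine ⟨Sum.elim o' t', (heval _).trans ?_⟩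
    have hodd : (fun j => eval (Sum.elim o' t') (o j)) = o' := by
      funext j
      by_cases hj : j ∈ D
      · simp [ho, hj]
      · simp [ho, hj, ho' j hj]
    simp only [hodd, ht, eval_X, Sum.elim_inr]

end Parametrization

section Admissible

variable {n : ℕ} {D : Finset ℕ}

/-- The set `S ⊆ A'_n` of the odd indices `2j - 1` with `j ∉ D`; it is a Fibonacci subset when `D`
is sparse. Whether `1` and `n + 1` belong to `D` is not recorded in `S`, and corresponds to the
choices allowed in `U2` and `U3`. -/
def oddZeros (n : ℕ) (D : Finset ℕ) : Finset ℕ :=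
  (Aset' n).filter fun a => (a + 1) / 2 ∉ D

theorem mem_Aset' {a : ℕ} : a ∈ Aset' n ↔ a < 2 * n ∧ a % 2 = 1 ∧ 3 ≤ a := by
  rw [Aset', Finset.mem_filter, Finset.mem_range]

theorem two_mul_sub_one_mem_oddZeros {j : ℕ} :
    2 * j - 1 ∈ oddZeros n D ↔ 2 ≤ j ∧ j ≤ n ∧ j ∉ D := by
  rw [oddZeros, Finset.mem_filter, mem_Aset']
  constructor
  · rintro ⟨hj, hjD⟩
    exact ⟨by omega, by omega, by rwa [show (2 * j - 1 + 1) / 2 = j by omega] at hjD⟩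
  · rintro ⟨hj, hjn, hjD⟩
    exact ⟨by omega, by rwa [show (2 * j - 1 + 1) / 2 = j by omega]⟩

theorem exists_of_mem_oddZeros {a : ℕ} (ha : a ∈ oddZeros n D) :
    ∃ j, a = 2 * j - 1 ∧ 2 ≤ j ∧ j ≤ n ∧ j ∉ D := by
  obtain ⟨ha', haD⟩ := Finset.mem_filter.mp ha
  rw [mem_Aset'] at ha'
  exact ⟨(a + 1) / 2, by omega, by omega, by omega, haD⟩

theorem IsSparse.isFib_oddZeros (hD : IsSparse n D) : IsFib n (oddZeros n D) := by
  refine ⟨Finset.filter_subset _ _, fun j hj hjn => ?_⟩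
  by_cases hj1 : j + 1 ∈ D
  · exact Or.inr (two_mul_sub_one_mem_oddZeros (j := j + 2).mpr
      ⟨by omega, by omega, hD.succ_notMem _ hj1⟩)
  · exact Or.inl (two_mul_sub_one_mem_oddZeros (j := j + 1).mpr ⟨by omega, by omega, hj1⟩)

theorem HasGoodGaps.one_mem (hgood : HasGoodGaps n D) (hD : IsSparse n D) (h3 : 3 ∈ D) :
    1 ∈ D := by
  by_contra h1
  have h2 : 2 ∉ D := fun h2 => hD.succ_notMem 2 h2 h3
  have h0 : 0 ∉ D := fun h0 => absurd (hD.pos h0) (by omega)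
  have hgap : IsGap n D 0 3 :=
    ⟨by omega, by omega, fun j _ hj => by interval_cases j <;> assumption,
      fun c hc => absurd hc c.succ_ne_zero, Or.inr h3⟩
  rcases hgood 0 3 hgap with h | ⟨k, hk⟩ <;> omega

theorem HasGoodGaps.add_one_mem (hgood : HasGoodGaps n D) (hD : IsSparse n D)
    (hpred : n - 1 ∈ D) : n + 1 ∈ D := by
  by_contra hsucc
  have hpos := hD.pos hpred
  have hmid : n ∉ D := by simpa only [show n - 1 + 1 = n by omega] using hD.succ_notMem _ hpred
  have hgap : IsGap n D n (n + 3) := by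
    refine ⟨by omega, le_rfl, fun j hnj hj hjD => ?_,
      fun c hc => by rwa [show c = n - 1 by omega], Or.inl rfl⟩
    have := hD.le hjD
    obtain rfl | rfl : j = n ∨ j = n + 1 := by omega
    exacts [hmid hjD, hsucc hjD]
  rcases hgood n (n + 3) hgap with h | ⟨k, hk⟩ <;> omega

theorem goodRuns_oddZeros_iff : GoodRuns (oddZeros n D) ↔
    ∀ p q, 2 ≤ p → p < q → q ≤ n + 1 → (∀ i, p ≤ i → i < q → i ∉ D) →
      (p = 2 ∨ p - 1 ∈ D) → (q = n + 1 ∨ q ∈ D) → (q = p + 1 ∨ Even (q - p)) := by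
  constructor
  · intro hruns p q hp hpq hq hnotMem hleft hright
    have hrun := hruns (2 * p - 1) (q - p) (by omega) (fun i hi => ?_) ?_ ?_
    · exact hrun.imp_left (by omega)
    · rw [show 2 * p - 1 + 2 * i = 2 * (p + i) - 1 by omega, two_mul_sub_one_mem_oddZeros]
      exact ⟨by omega, by omega, hnotMem _ (by omega) (by omega)⟩
    · rw [show 2 * p - 1 - 2 = 2 * (p - 1) - 1 by omega, two_mul_sub_one_mem_oddZeros]
      grind
    · rw [show 2 * p - 1 + 2 * (q - p) = 2 * q - 1 by omega, two_mul_sub_one_mem_oddZeros]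
      grind
  · intro hgood s m hm hrun hpred hsucc
    obtain ⟨p, rfl, hp, -, -⟩ := exists_of_mem_oddZeros (hrun 0 hm)
    have hin : ∀ i, p ≤ i → i < p + m → i ≤ n ∧ i ∉ D := by
      intro i hpi hi
      have h := hrun (i - p) (by omega)
      rw [show 2 * p - 1 + 2 * (i - p) = 2 * i - 1 by omega, two_mul_sub_one_mem_oddZeros] at h
      exact h.2
    have hlast := (hin (p + m - 1) (by omega) (by omega)).1
    rw [show 2 * p - 1 - 2 = 2 * (p - 1) - 1 by omega, two_mul_sub_one_mem_oddZeros] at hpred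
    rw [show 2 * p - 1 + 2 * m = 2 * (p + m) - 1 by omega,
      two_mul_sub_one_mem_oddZeros] at hsucc
    have hlen := hgood p (p + m) hp (by omega) (by omega) (fun i hpi hi => (hin i hpi hi).2)
      (by grind) (by grind)
    rw [Nat.add_sub_cancel_left] at hlen
    exact hlen.imp_left (by omega)

/-- A run of `S` is a gap of `D` cut down to `{2, …, n}`; the indices `0`, `1` and `n + 1`, `n + 2`
which are lost come in pairs, so the parity of the length does not change. -/
theorem HasGoodGaps.goodRuns_oddZeros (hgood : HasGoodGaps n D) (hD : IsSparse n D) :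
    GoodRuns (oddZeros n D) := by
  refine goodRuns_oddZeros_iff.mpr fun p q hp hpq hq hnotMem hleft hright => ?_
  have h0 : 0 ∉ D := fun h0 => absurd (hD.pos h0) (by omega)
  have hn2 : n + 2 ∉ D := fun hn2 => absurd (hD.le hn2) (by omega)
  obtain ⟨a, ha⟩ : ∃ a, a = p ∧ p - 1 ∈ D ∨ a = 0 ∧ p = 2 ∧ 1 ∉ D := by grind
  obtain ⟨b, hb⟩ : ∃ b, b = q ∧ q ∈ D ∨ b = n + 3 ∧ q = n + 1 ∧ n + 1 ∉ D := by grind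
  have hgap : IsGap n D a b := by
    refine ⟨by omega, by omega, fun i hai hib => ?_, by grind, by grind⟩
    by_cases hi : p ≤ i ∧ i < q
    · exact hnotMem i hi.1 hi.2
    · grind
  rcases hgood a b hgap with hlen | ⟨k, hk⟩
  · exact Or.inl (by omega)
  · exact Or.inr (Nat.even_iff.mpr (by omega))

theorem hasGoodGaps_of_goodRuns_oddZeros (hn : 3 ≤ n) (hD : IsSparse n D)
    (hruns : GoodRuns (oddZeros n D)) (hleft : 3 ∈ D → 1 ∈ D)
    (hright : n - 1 ∈ D → n + 1 ∈ D) : HasGoodGaps n D := by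
  intro a b hgap
  have hab := hgap.lt
  have hbn := hgap.le
  have ha : a = 0 ∨ 2 ≤ a ∧ a - 1 ∈ D := by
    rcases Nat.eq_zero_or_pos a with ha | ha
    · exact Or.inl ha
    · have hpred := hgap.left (a - 1) (by omega)
      have := hD.pos hpred
      exact Or.inr ⟨by omega, hpred⟩
  have hb : b = n + 3 ∨ b ≤ n + 1 ∧ b ∈ D := hgap.right.imp_right fun h => ⟨hD.le h, h⟩
  rcases Nat.lt_or_ge (max a 2) (min b (n + 1)) with hlt | hge
  · have h1 : a = 0 → 1 ∉ D := fun h => hgap.notMem 1 (by omega) (by omega)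
    have hn1 : b = n + 3 → n + 1 ∉ D := fun h => hgap.notMem _ (by omega) (by omega)
    rcases goodRuns_oddZeros_iff.mp hruns (max a 2) (min b (n + 1)) (by omega) hlt (by omega)
      (fun i hi hi' => hgap.notMem i (by omega) (by omega)) (by grind) (by grind)
      with hone | ⟨k, hk⟩
    · grind
    · exact Or.inr (Nat.even_iff.mpr (by omega))
  · have hpred : a = 0 ∨ a ≤ n + 2 := ha.imp_right fun h => by have := hD.le h.2; omega
    rw [Nat.even_iff]
    omega

/-- The generators of `supportGens n D` coming from the left end of the path: the possible sets
`U2`. -/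
noncomputable def leftGens (n : ℕ) (D : Finset ℕ) :
    Finset (MvPolynomial (Fin (2 * n + 1)) ℂ) :=
  (if 1 ∈ D then ∅ else {xv n 1}) ∪ linkGens n D 0 ∪ linkGens n D 1

/-- The generators of `supportGens n D` coming from the right end of the path: the possible sets
`U3`. -/
noncomputable def rightGens (n : ℕ) (D : Finset ℕ) :
    Finset (MvPolynomial (Fin (2 * n + 1)) ℂ) :=
  (if n + 1 ∈ D then ∅ else {xv n (2 * n + 1)}) ∪ linkGens n D (n - 1) ∪ linkGens n D n

theorem U1_oddZeros :
    U1 n (oddZeros n D) = (Finset.Icc 2 n \ D).image fun j => xv n (2 * j - 1) := by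
  ext q
  simp only [U1, Finset.mem_image, Finset.mem_sdiff, Finset.mem_Icc]
  constructor
  · rintro ⟨a, ha, rfl⟩
    obtain ⟨j, rfl, hj, hjn, hjD⟩ := exists_of_mem_oddZeros ha
    exact ⟨j, ⟨⟨hj, hjn⟩, hjD⟩, rfl⟩
  · rintro ⟨j, ⟨⟨hj, hjn⟩, hjD⟩, rfl⟩
    exact ⟨2 * j - 1, two_mul_sub_one_mem_oddZeros.mpr ⟨hj, hjn, hjD⟩, rfl⟩

theorem Tpart_oddZeros {j : ℕ} (hj : 2 ≤ j) (hjn : j + 2 ≤ n) :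
    Tpart n (oddZeros n D) (2 * j + 1) = linkGens n D j := by
  have hmem : 2 * j + 1 - 2 ∈ oddZeros n D ↔ j ∉ D := by
    rw [show 2 * j + 1 - 2 = 2 * j - 1 by omega, two_mul_sub_one_mem_oddZeros]
    exact ⟨fun h => h.2.2, fun h => ⟨hj, by omega, h⟩⟩
  have hmem2 : 2 * j + 1 + 2 ∈ oddZeros n D ↔ j + 2 ∉ D :=
    two_mul_sub_one_mem_oddZeros (j := j + 2).trans
      ⟨fun h => h.2.2, fun h => ⟨by omega, hjn, h⟩⟩
  simp only [Tpart, linkGens, hmem, hmem2, ite_not, Nat.add_sub_cancel]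

theorem U4_oddZeros :
    U4 n (oddZeros n D) = (Finset.Icc 2 (n - 2)).biUnion (linkGens n D) := by
  have hAset : Aset n = (Finset.Icc 2 (n - 2)).image fun j => 2 * j + 1 := by
    ext a
    simp only [Aset, Finset.mem_filter, mem_Aset', Finset.mem_image, Finset.mem_Icc]
    exact ⟨fun h => ⟨a / 2, by omega⟩, by omega⟩
  rw [U4, hAset, Finset.image_biUnion]
  refine Finset.biUnion_congr rfl fun j hj => ?_
  rw [Finset.mem_Icc] at hj
  exact Tpart_oddZeros hj.1 (by omega)

theorem supportGens_eq_union (hn : 3 ≤ n) :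
    supportGens n D =
      U1 n (oddZeros n D) ∪ leftGens n D ∪ rightGens n D ∪ U4 n (oddZeros n D) := by
  have hodd : Finset.Icc 1 (n + 1) \ D =
      (Finset.Icc 2 n \ D) ∪ (if 1 ∈ D then ∅ else {1}) ∪ (if n + 1 ∈ D then ∅ else {n + 1}) := by
    ext j
    simp only [Finset.mem_sdiff, Finset.mem_Icc, Finset.mem_union]
    split_ifs <;> grind
  have hlink : Finset.range (n + 1) = {0, 1} ∪ {n - 1, n} ∪ Finset.Icc 2 (n - 2) := by
    ext j
    simp only [Finset.mem_range, Finset.mem_union, Finset.mem_insert, Finset.mem_singleton,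
      Finset.mem_Icc]
    omega
  rw [U1_oddZeros, U4_oddZeros, supportGens, hodd, hlink, Finset.image_union,
    Finset.image_union, Finset.union_biUnion, Finset.union_biUnion, Finset.biUnion_insert,
    Finset.biUnion_insert, Finset.singleton_biUnion, Finset.singleton_biUnion,
    apply_ite (Finset.image _), apply_ite (Finset.image _), Finset.image_empty,
    Finset.image_singleton, Finset.image_singleton, show 2 * 1 - 1 = 1 from rfl,
    show 2 * (n + 1) - 1 = 2 * n + 1 from rfl, leftGens, rightGens]
  ac_rfl

theorem IsSparse.U2ok_leftGens (hD : IsSparse n D) (hn : 3 ≤ n) (hleft : 3 ∈ D → 1 ∈ D) :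
    U2ok n (oddZeros n D) (leftGens n D) := by
  have hS3 : 3 ∈ oddZeros n D ↔ 2 ∉ D :=
    two_mul_sub_one_mem_oddZeros (j := 2).trans (by grind)
  have hS5 : 5 ∈ oddZeros n D ↔ 3 ∉ D :=
    two_mul_sub_one_mem_oddZeros (j := 3).trans (by grind)
  have h0 : 0 ∉ D := fun h0 => absurd (hD.pos h0) (by omega)
  have h12 := hD.succ_notMem 1
  have h23 := hD.succ_notMem 2
  simp only [U2ok, leftGens, linkGens, hS3, hS5]
  by_cases h2 : 2 ∈ D <;> by_cases h3 : 3 ∈ D <;> by_cases h1 : 1 ∈ D <;> simp_all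

theorem U2ok.exists_leftGens_eq {S : Finset ℕ} {U : Finset (MvPolynomial (Fin (2 * n + 1)) ℂ)}
    (hU : U2ok n S U) (hn : 3 ≤ n) : ∃ l : Prop, (l → 3 ∈ S) ∧ (5 ∉ S → l) ∧
      ∀ D, IsSparse n D → oddZeros n D = S → (1 ∈ D ↔ l) → leftGens n D = U := by
  have hmem : ∀ D, IsSparse n D → oddZeros n D = S →
      0 ∉ D ∧ (2 ∈ D ↔ 3 ∉ S) ∧ (3 ∈ D ↔ 5 ∉ S) := by
    rintro D hD rfl
    have h3 := two_mul_sub_one_mem_oddZeros (n := n) (D := D) (j := 2)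
    have h5 := two_mul_sub_one_mem_oddZeros (n := n) (D := D) (j := 3)
    exact ⟨fun h0 => absurd (hD.pos h0) (by omega), by grind, by grind⟩
  rcases hU with ⟨h3, h5, rfl⟩ | ⟨h3, h5, rfl | rfl⟩ | ⟨h3, h5, rfl⟩
  · refine ⟨False, by simp, by simp [h5], fun D hD hS h1 => ?_⟩
    obtain ⟨h0, hD2, hD3⟩ := hmem D hD hS
    simp [leftGens, linkGens, h0, h1, hD2, hD3, h3, h5]
  · refine ⟨False, by simp, by simp [h5], fun D hD hS h1 => ?_⟩
    obtain ⟨h0, hD2, hD3⟩ := hmem D hD hS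
    simp [leftGens, linkGens, h0, h1, hD2, hD3, h3, h5]
  · refine ⟨True, by simp [h3], by simp, fun D hD hS h1 => ?_⟩
    obtain ⟨h0, hD2, hD3⟩ := hmem D hD hS
    simp [leftGens, linkGens, h0, h1, hD2, hD3, h3, h5]
  · refine ⟨True, by simp [h3], by simp, fun D hD hS h1 => ?_⟩
    obtain ⟨h0, hD2, hD3⟩ := hmem D hD hS
    simp [leftGens, linkGens, h0, h1, hD2, hD3, h3, h5]

theorem linkGens_pred (hn : 1 ≤ n) : linkGens n D (n - 1) =
    if n - 1 ∈ D then (if n + 1 ∈ D then {pv n (2 * n - 1)} else {xv n (2 * (n - 1))})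
    else (if n + 1 ∈ D then {xv n (2 * n)} else ∅) := by
  rw [linkGens, show n - 1 + 2 = n + 1 by omega, show 2 * (n - 1) + 1 = 2 * n - 1 by omega,
    show 2 * (n - 1) + 2 = 2 * n by omega]

theorem IsSparse.U3ok_rightGens (hD : IsSparse n D) (hn : 3 ≤ n)
    (hright : n - 1 ∈ D → n + 1 ∈ D) : U3ok n (oddZeros n D) (rightGens n D) := by
  have hSlast : 2 * n - 1 ∈ oddZeros n D ↔ n ∉ D :=
    two_mul_sub_one_mem_oddZeros.trans (by grind)
  have hSpred : 2 * n - 3 ∈ oddZeros n D ↔ n - 1 ∉ D := by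
    rw [show 2 * n - 3 = 2 * (n - 1) - 1 by omega, two_mul_sub_one_mem_oddZeros]
    grind
  have hn2 : n + 2 ∉ D := fun hn2 => absurd (hD.le hn2) (by omega)
  have hlast := hD.succ_notMem n
  have hpred := hD.succ_notMem (n - 1)
  rw [show n - 1 + 1 = n by omega] at hpred
  rw [rightGens, linkGens_pred (by omega)]
  simp only [U3ok, linkGens, hSlast, hSpred]
  by_cases h2 : n ∈ D <;> by_cases h3 : n - 1 ∈ D <;> by_cases h1 : n + 1 ∈ D <;>
    simp_all [Finset.union_comm]

theorem U3ok.exists_rightGens_eq {S : Finset ℕ} {U : Finset (MvPolynomial (Fin (2 * n + 1)) ℂ)}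
    (hU : U3ok n S U) (hn : 3 ≤ n) : ∃ r : Prop, (r → 2 * n - 1 ∈ S) ∧ (2 * n - 3 ∉ S → r) ∧
      ∀ D, IsSparse n D → oddZeros n D = S → (n + 1 ∈ D ↔ r) → rightGens n D = U := by
  have hmem : ∀ D, IsSparse n D → oddZeros n D = S →
      n + 2 ∉ D ∧ (n ∈ D ↔ 2 * n - 1 ∉ S) ∧ (n - 1 ∈ D ↔ 2 * n - 3 ∉ S) := by
    rintro D hD rfl
    rw [show 2 * n - 3 = 2 * (n - 1) - 1 by omega, two_mul_sub_one_mem_oddZeros,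
      two_mul_sub_one_mem_oddZeros]
    exact ⟨fun hn2 => absurd (hD.le hn2) (by omega), by grind, by grind⟩
  rcases hU with ⟨hlast, hpred, rfl⟩ | ⟨hpred, hlast, rfl | rfl⟩ | ⟨hlast, hpred, rfl⟩
  · refine ⟨False, by simp, by simp [hpred], fun D hD hS h1 => ?_⟩
    obtain ⟨hn2, hDn, hDpred⟩ := hmem D hD hS
    rw [rightGens, linkGens_pred (by omega)]
    simp [linkGens, hn2, h1, hDn, hDpred, hlast, hpred, Finset.pair_comm]
  · refine ⟨True, by simp [hlast], by simp, fun D hD hS h1 => ?_⟩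
    obtain ⟨hn2, hDn, hDpred⟩ := hmem D hD hS
    rw [rightGens, linkGens_pred (by omega)]
    simp [linkGens, hn2, h1, hDn, hDpred, hlast, hpred]
  · refine ⟨False, by simp, by simp [hpred], fun D hD hS h1 => ?_⟩
    obtain ⟨hn2, hDn, hDpred⟩ := hmem D hD hS
    rw [rightGens, linkGens_pred (by omega)]
    simp [linkGens, hn2, h1, hDn, hDpred, hlast, hpred]
  · refine ⟨True, by simp [hlast], by simp, fun D hD hS h1 => ?_⟩
    obtain ⟨hn2, hDn, hDpred⟩ := hmem D hD hS
    rw [rightGens, linkGens_pred (by omega)]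
    simp [linkGens, hn2, h1, hDn, hDpred, hlast, hpred]

theorem IsFib.exists_isSparse {S : Finset ℕ} (hS : IsFib n S) (hn : 3 ≤ n) {l r : Prop}
    (hl : l → 3 ∈ S) (hr : r → 2 * n - 1 ∈ S) :
    ∃ D, IsSparse n D ∧ oddZeros n D = S ∧ (1 ∈ D ↔ l) ∧ (n + 1 ∈ D ↔ r) := by
  classical
  obtain ⟨hsub, hfib⟩ := hS
  set D := (Finset.Icc 1 (n + 1)).filter fun j =>
    (j = 1 ∧ l) ∨ (j = n + 1 ∧ r) ∨ (2 ≤ j ∧ j ≤ n ∧ 2 * j - 1 ∉ S) with hDdef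
  have hmem : ∀ j, 2 ≤ j → j ≤ n → (j ∈ D ↔ 2 * j - 1 ∉ S) := by grind
  have hone : 1 ∈ D ↔ l := by grind
  have hlast : n + 1 ∈ D ↔ r := by grind
  refine ⟨D, ⟨Finset.filter_subset _ _, fun j hj hj1 => ?_⟩, ?_, hone, hlast⟩
  · have hj0 := (Finset.mem_Icc.mp (Finset.mem_filter.mp hj).1).1
    have hjn := (Finset.mem_Icc.mp (Finset.mem_filter.mp hj1).1).2
    rcases hj0.eq_or_lt with rfl | hj0
    · exact (hmem 2 le_rfl (by omega)).mp hj1 (hl (hone.mp hj))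
    rcases hjn.eq_or_lt with hjn | hjn
    · obtain rfl : j = n := by omega
      exact (hmem j hj0 le_rfl).mp hj (hr (hlast.mp hj1))
    · have h := hfib (j - 1) (by omega) (by omega)
      rw [show 2 * (j - 1) + 1 = 2 * j - 1 by omega,
        show 2 * (j - 1) + 3 = 2 * (j + 1) - 1 by omega] at h
      exact h.elim ((hmem j hj0 (by omega)).mp hj) ((hmem _ (by omega) (by omega)).mp hj1)
  · ext a
    constructor
    · intro ha
      obtain ⟨j, rfl, hj, hjn, hjD⟩ := exists_of_mem_oddZeros ha
      exact not_not.mp (mt (hmem j hj hjn).mpr hjD)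
    · intro ha
      obtain ⟨han, hodd, ha3⟩ := mem_Aset'.mp (hsub ha)
      obtain ⟨j, rfl⟩ : ∃ j, a = 2 * j - 1 := ⟨(a + 1) / 2, by omega⟩
      exact two_mul_sub_one_mem_oddZeros.mpr ⟨by omega, by omega, fun hj =>
        (hmem j (by omega) (by omega)).mp hj ha⟩

theorem isAdmissible_iff_exists_supportGens (hn : 3 ≤ n) {S : Finset ℕ}
    {B : Finset (MvPolynomial (Fin (2 * n + 1)) ℂ)} :
    (IsFib n S ∧ GoodRuns S) ∧ IsAdmissible n S B ↔
      ∃ D, (IsSparse n D ∧ HasGoodGaps n D) ∧ oddZeros n D = S ∧ supportGens n D = B := by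
  constructor
  · rintro ⟨⟨hS, hruns⟩, U, U', hU, hU', rfl⟩
    obtain ⟨l, hl, hl', hleft⟩ := hU.exists_leftGens_eq hn
    obtain ⟨r, hr, hr', hright⟩ := hU'.exists_rightGens_eq hn
    obtain ⟨D, hD, rfl, h1, hn1⟩ := hS.exists_isSparse hn hl hr
    refine ⟨D, ⟨hD, hasGoodGaps_of_goodRuns_oddZeros hn hD hruns (fun h3 => ?_) fun hpred => ?_⟩,
      rfl, ?_⟩
    · exact h1.mpr (hl' fun h5 => (two_mul_sub_one_mem_oddZeros (j := 3).mp h5).2.2 h3)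
    · rw [show 2 * n - 3 = 2 * (n - 1) - 1 by omega, two_mul_sub_one_mem_oddZeros] at hr'
      exact hn1.mpr (hr' fun h => h.2.2 hpred)
    · rw [supportGens_eq_union hn, hleft D hD rfl h1, hright D hD rfl hn1]
  · rintro ⟨D, ⟨hD, hgood⟩, rfl, rfl⟩
    exact ⟨⟨hD.isFib_oddZeros, hgood.goodRuns_oddZeros hD⟩, leftGens n D, rightGens n D,
      hD.U2ok_leftGens hn (hgood.one_mem hD), hD.U3ok_rightGens hn (hgood.add_one_mem hD),
      supportGens_eq_union hn⟩

end Admissible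

/-- For `n ≥ 3`, the nullvariety of `P_n^3` is the union of the zero sets `Z(B)` of the
`S`-admissible sets `B` for `S ∈ F̂_n`; each `Z(B)` is the zero locus of a prime ideal;
and for distinct admissible sets `B ≠ B'` neither zero set contains the other.
Hence these `Z(B)` are exactly the irreducible components of the nullvariety. -/
theorem nullvariety_decomposition (n : ℕ) (hn : 3 ≤ n) :
    (nullVariety n =
      ⋃ (S : Finset ℕ) (_ : IsFib n S ∧ GoodRuns S)
        (B : Finset (MvPolynomial (Fin (2 * n + 1)) ℂ)) (_ : IsAdmissible n S B),
          Zset n B) ∧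
    (∀ (S : Finset ℕ) (B : Finset (MvPolynomial (Fin (2 * n + 1)) ℂ)),
      IsFib n S → GoodRuns S → IsAdmissible n S B →
        ∃ I : Ideal (MvPolynomial (Fin (2 * n + 1)) ℂ), I.IsPrime ∧
          Zset n B = {z | ∀ q ∈ I, eval z q = 0}) ∧
    (∀ (S S' : Finset ℕ) (B B' : Finset (MvPolynomial (Fin (2 * n + 1)) ℂ)),
      IsFib n S → GoodRuns S → IsAdmissible n S B →
      IsFib n S' → GoodRuns S' → IsAdmissible n S' B' →
      B ≠ B' → ¬ Zset n B ⊆ Zset n B' ∧ ¬ Zset n B' ⊆ Zset n B) := by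
  refine ⟨Set.Subset.antisymm (fun z hz => ?_) ?_, fun S B hS hR hB => ?_, ?_⟩
  · obtain ⟨D, hD, hzD⟩ := exists_isSparse_of_mem_nullVariety hz (by omega)
    obtain ⟨D', hD', hgood, hsub⟩ := hD.exists_hasGoodGaps_zset_subset
    obtain ⟨hS, hB⟩ := (isAdmissible_iff_exists_supportGens hn).mpr ⟨D', ⟨hD', hgood⟩, rfl, rfl⟩
    exact Set.mem_iUnion₂_of_mem hS (Set.mem_iUnion₂_of_mem hB (hsub hzD))
  · refine Set.iUnion₂_subset fun S hS => Set.iUnion₂_subset fun B hB => ?_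
    obtain ⟨D, ⟨hD, -⟩, -, rfl⟩ := (isAdmissible_iff_exists_supportGens hn).mp ⟨hS, hB⟩
    exact hD.zset_subset_nullVariety (by omega)
  · obtain ⟨D, ⟨hD, -⟩, -, rfl⟩ := (isAdmissible_iff_exists_supportGens hn).mp ⟨⟨hS, hR⟩, hB⟩
    exact hD.exists_isPrime_zset_eq
  · intro S S' B B' hS hR hB hS' hR' hB' hne
    obtain ⟨D, ⟨hD, hgood⟩, -, rfl⟩ :=
      (isAdmissible_iff_exists_supportGens hn).mp ⟨⟨hS, hR⟩, hB⟩
    obtain ⟨D', ⟨hD', hgood'⟩, -, rfl⟩ :=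
      (isAdmissible_iff_exists_supportGens hn).mp ⟨⟨hS', hR'⟩, hB'⟩
    exact ⟨fun hsub => hne (congrArg _ (hgood.eq_of_zset_subset hD hD' hsub)),
      fun hsub => hne (congrArg _ (hgood'.eq_of_zset_subset hD' hD hsub).symm)⟩
end

section
/- For every n ≥ 3, the Krull dimension of the quotient ring C[x1, ..., x_{2n+1}]/I equals 2⌊n/2⌋ + 1, where I is the ideal generated by the 2n+1 link polynomials of P_n^3. Equivalently, the nullvariety of the 3-uniform loose hyperpath P_n^3 has dimension 2⌊n/2⌋ + 1. -/
open MvPolynomial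

/-- The `2n+1` link polynomials of the 3-uniform loose hyperpath `P_n^3`:
`x₂x₃` (vertex `v₁`), `x_{2j−1}x_{2j+1}` for `1 ≤ j ≤ n` (vertices `v_{2j}`),
`x_{2j−1}x_{2j} + x_{2j+2}x_{2j+3}` for `1 ≤ j ≤ n−1` (vertices `v_{2j+1}`), and
`x_{2n−1}x_{2n}` (vertex `v_{2n+1}`). -/
noncomputable def linkSet (n : ℕ) : Set (MvPolynomial (Fin (2 * n + 1)) ℂ) :=
  {xv n 2 * xv n 3, xv n (2 * n - 1) * xv n (2 * n)} ∪
  (fun j => xv n (2 * j - 1) * xv n (2 * j + 1)) '' {j | 1 ≤ j ∧ j ≤ n} ∪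
  (fun j => xv n (2 * j - 1) * xv n (2 * j) + xv n (2 * j + 2) * xv n (2 * j + 3)) ''
    {j | 1 ≤ j ∧ j ≤ n - 1}

/-!
Write `a_j = x_{2j+1}` for the spine coordinates and `b_j = x_{2j}` for the middle ones.

Upper bound: at the generic point of a component no two adjacent `a_j` are both nonzero. The odd
edges `{a_{2i}, b_{2i+1}, a_{2i+1}}` cover the spine, once the path is continued by zeros. On each
of them at most one `a` survives, and if one does, the link of its opposite spine vertex is a linear
equation for `b_{2i+1}` over the other coordinates. So each odd edge contributes one parameter, each
even edge contributes only its middle coordinate, and there are at most `2⌊n/2⌋ + 1` parameters.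

Lower bound: the `2⌈n/2⌉` polynomials consisting of the `a_j` and the links of the spine vertices
with `j` odd generate an ideal containing `I` and vanish at the origin, so Krull's height theorem
gives dimension at least `2n + 1 - 2⌈n/2⌉ = 2⌊n/2⌋ + 1`.
-/

section KrullDimension

lemma ringKrullDim_le_of_isIntegral (R S : Type*) [CommRing R] [CommRing S] [Algebra R S]
    [Algebra.IsIntegral R S] : ringKrullDim S ≤ ringKrullDim R :=
  Order.krullDim_le_of_strictMono (PrimeSpectrum.comap (algebraMap R S))
    fun _ _ hPQ => Ideal.IsIntegral.comap_lt_comap hPQ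

lemma algebraMap_quotient_injective_of_liesOver_bot {R S : Type*} [CommRing R] [CommRing S]
    [Algebra R S] (Q : Ideal S) [Q.LiesOver (⊥ : Ideal R)] :
    Function.Injective (algebraMap R (S ⧸ Q)) := by
  rw [injective_iff_map_eq_zero]
  intro r hr
  have hrQ : algebraMap R S r ∈ Q := Ideal.Quotient.eq_zero_iff_mem.mp hr
  rwa [← Ideal.mem_of_liesOver Q (⊥ : Ideal R), Ideal.mem_bot] at hrQ

lemma ringKrullDim_le_of_forall_isPrime_trdeg_quotient_le (K : Type*) {A : Type*} [Field K]
    [CommRing A] [Algebra K A] [Algebra.FiniteType K A] {d : ℕ}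
    (h : ∀ Q : Ideal A, Q.IsPrime → Algebra.trdeg K (A ⧸ Q) ≤ d) :
    ringKrullDim A ≤ d := by
  nontriviality A
  obtain ⟨s, g, g_injective, g_integral⟩ := exists_integral_inj_algHom_of_fg K A
  algebraize [g.toRingHom]
  have : FaithfulSMul (MvPolynomial (Fin s) K) A :=
    (faithfulSMul_iff_algebraMap_injective _ _).mpr g_injective
  obtain ⟨Q, Q_prime, _⟩ :=
    (inferInstance : Nonempty (Ideal.primesOver (⊥ : Ideal (MvPolynomial (Fin s) K)) A))
  have s_le : s ≤ d := by
    have comp_injective : Function.Injective ((Ideal.Quotient.mkₐ K Q).comp g) :=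
      algebraMap_quotient_injective_of_liesOver_bot (R := MvPolynomial (Fin s) K) Q
    have trdeg_le := lift_trdeg_le_of_injective _ comp_injective
    rw [MvPolynomial.trdeg_of_isDomain] at trdeg_le
    have := trdeg_le.trans (Cardinal.lift_le.mpr (h Q Q_prime))
    simpa using this
  calc ringKrullDim A ≤ ringKrullDim (MvPolynomial (Fin s) K) := ringKrullDim_le_of_isIntegral _ _
    _ = s := by simp [MvPolynomial.ringKrullDim_of_isNoetherianRing]
    _ ≤ d := by exact_mod_cast s_le

end KrullDimension

section Origin

variable {σ R : Type*} [CommRing R]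

/-- The substitution that sets the variables in `s` to zero. For `R` a domain its kernel is the
prime ideal of the coordinate subspace where the variables in `s` vanish. -/
noncomputable def killVars (R : Type*) [CommRing R] (s : Set σ) :
    MvPolynomial σ R →ₐ[R] MvPolynomial σ R :=
  aeval (sᶜ.indicator X)

lemma killVars_X_of_mem {s : Set σ} {i : σ} (hi : i ∈ s) :
    killVars R s (X i) = 0 := by
  simp [killVars, hi]

lemma killVars_X_of_notMem {s : Set σ} {i : σ} (hi : i ∉ s) :
    killVars R s (X i) = X i := by
  simp [killVars, hi]

lemma killVars_comp_killVars_of_subset {s t : Set σ} (hst : s ⊆ t) :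
    (killVars R t).comp (killVars R s) = killVars R t := by
  refine MvPolynomial.algHom_ext fun i => ?_
  rw [AlgHom.comp_apply]
  by_cases hi : i ∈ s
  · rw [killVars_X_of_mem hi, map_zero, killVars_X_of_mem (hst hi)]
  · rw [killVars_X_of_notMem hi]

lemma ker_killVars_lt_ker_killVars [Nontrivial R] {s t : Set σ} (hst : s ⊂ t) :
    RingHom.ker (killVars R s) < RingHom.ker (killVars R t) := by
  obtain ⟨hsub, i, hit, his⟩ := Set.ssubset_iff_exists.mp hst
  refine SetLike.lt_iff_le_and_exists.mpr ⟨fun p hp => ?_, X i, killVars_X_of_mem hit, fun h => ?_⟩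
  · rw [RingHom.mem_ker] at hp ⊢
    rw [← killVars_comp_killVars_of_subset hsub, AlgHom.comp_apply, hp, map_zero]
  · rw [RingHom.mem_ker, killVars_X_of_notMem his] at h
    exact X_ne_zero i h

lemma card_le_height_ker_killVars [IsDomain R] (s : Finset σ) :
    (s.card : ℕ∞) ≤ (RingHom.ker (killVars R (s : Set σ))).height := by
  classical
  induction s using Finset.induction_on with
  | empty => simp
  | insert i s hi ih =>
    have hlt := ker_killVars_lt_ker_killVars (R := R)
      (Finset.coe_ssubset.mpr (Finset.ssubset_insert hi))
    have : (RingHom.ker (killVars R (s : Set σ))).IsPrime := RingHom.ker_isPrime _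
    have : (RingHom.ker (killVars R (↑(insert i s) : Set σ))).IsPrime := RingHom.ker_isPrime _
    rw [Finset.card_insert_of_notMem hi, Nat.cast_succ]
    grw [ih]
    exact Ideal.height_add_one_le_of_lt_of_isPrime hlt

lemma killVars_univ_apply (p : MvPolynomial σ R) :
    killVars R Set.univ p = C (constantCoeff p) := by
  simp only [killVars, Set.compl_univ, Set.indicator_empty]
  exact aeval_zero p

lemma natCard_le_ringKrullDim_quotient_span_add_encard [IsDomain R] [IsNoetherianRing R] [Finite σ]
    {s : Set (MvPolynomial σ R)} (hs : ∀ p ∈ s, constantCoeff p = 0) :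
    (Nat.card σ : WithBot ℕ∞) ≤ ringKrullDim (MvPolynomial σ R ⧸ Ideal.span s) + s.encard := by
  have := Fintype.ofFinite σ
  have : (RingHom.ker (killVars R (Set.univ : Set σ))).IsPrime := RingHom.ker_isPrime _
  have card_le := card_le_height_ker_killVars (R := R) (Finset.univ : Finset σ)
  rw [Finset.coe_univ, Finset.card_univ, ← Nat.card_eq_fintype_card] at card_le
  refine le_trans (by exact_mod_cast card_le)
    (Ideal.height_le_ringKrullDim_quotient_add_encard s ?_)
  intro p hp
  rw [SetLike.mem_coe, RingHom.mem_ker, killVars_univ_apply, hs p hp, C_0]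

end Origin

/-- The link of the vertex `v` of a loose path with vertices `1, 2, …` and edges
`{2j-1, 2j, 2j+1}`, evaluated at the point `x`. A path with `n` edges is encoded by points whose
coordinates outside `1, …, 2n+1` vanish; in particular the first product is `x 0 * x 0` at the end
vertex `v = 1`, where the subtraction `v - 2` truncates. -/
def loosePathLink {A : Type*} [CommSemiring A] (x : ℕ → A) (v : ℕ) : A :=
  if Even v then x (v - 1) * x (v + 1) else x (v - 2) * x (v - 1) + x (v + 1) * x (v + 2)

section LoosePathLink

variable {A : Type*} [CommSemiring A] (x : ℕ → A)

lemma loosePathLink_of_even {v : ℕ} (hv : Even v) :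
    loosePathLink x v = x (v - 1) * x (v + 1) :=
  if_pos hv

lemma loosePathLink_of_odd {v : ℕ} (hv : Odd v) :
    loosePathLink x v = x (v - 2) * x (v - 1) + x (v + 1) * x (v + 2) :=
  if_neg (Nat.not_even_iff_odd.mpr hv)

lemma loosePathLink_two_mul (j : ℕ) :
    loosePathLink x (2 * j) = x (2 * j - 1) * x (2 * j + 1) :=
  loosePathLink_of_even x (even_two_mul j)

lemma loosePathLink_two_mul_add_one (j : ℕ) :
    loosePathLink x (2 * j + 1) =
      x (2 * j - 1) * x (2 * j) + x (2 * j + 2) * x (2 * j + 3) :=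
  loosePathLink_of_odd x (odd_two_mul_add_one j)

lemma map_loosePathLink {B F : Type*} [CommSemiring B] [FunLike F A B] [RingHomClass F A B] (f : F)
    (v : ℕ) : f (loosePathLink x v) = loosePathLink (f ∘ x) v := by
  unfold loosePathLink
  split_ifs <;> simp

lemma loosePathLink_mem_of_mod_four_eq_three {x} {J : Ideal A} (hzero : x 0 ∈ J)
    (hspine : ∀ i, x (4 * i + 3) ∈ J) (hlink : ∀ i, loosePathLink x (4 * i + 3) ∈ J) (v : ℕ) :
    loosePathLink x v ∈ J := by
  have hprev (i : ℕ) : x (4 * i - 1) ∈ J := by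
    rcases i with _ | i
    · exact hzero
    · exact hspine i
  obtain ⟨i, rfl | rfl | rfl | rfl⟩ :
      ∃ i, v = 4 * i ∨ v = 4 * i + 1 ∨ v = 4 * i + 2 ∨ v = 4 * i + 3 := ⟨v / 4, by omega⟩
  · rw [loosePathLink_of_even x (by grind)]
    exact J.mul_mem_right _ (hprev i)
  · rw [loosePathLink_of_odd x (by grind)]
    exact J.add_mem (J.mul_mem_right _ (hprev i)) (J.mul_mem_left _ (hspine i))
  · rw [loosePathLink_of_even x (by grind)]
    exact J.mul_mem_left _ (hspine i)
  · exact hlink i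

end LoosePathLink

section GenericPoint

open Classical in
/-- The parameter contributed by the edge `{4i+1, 4i+2, 4i+3}` at a common zero `x` of the links:
a nonzero spine coordinate if there is one, and the middle coordinate otherwise. -/
noncomputable def oddEdgeParam {B : Type*} [Zero B] (x : ℕ → B) (i : ℕ) : B :=
  if x (4 * i + 1) ≠ 0 then x (4 * i + 1)
  else if x (4 * i + 3) ≠ 0 then x (4 * i + 3) else x (4 * i + 2)

variable {R B : Type*} [CommRing R] [CommRing B] [IsDomain R] [IsDomain B] [Algebra R B]
  {x : ℕ → B}

lemma isAlgebraic_of_odd_of_oddEdgeParam (hlink : ∀ v, loosePathLink x v = 0)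
    (hparam : ∀ i, IsAlgebraic R (oddEdgeParam x i)) {j : ℕ} (hj : Odd j) :
    IsAlgebraic R (x j) := by
  by_cases hxj : x j = 0
  · simpa only [hxj] using isAlgebraic_zero
  obtain ⟨i, rfl | rfl⟩ : ∃ i, j = 4 * i + 1 ∨ j = 4 * i + 3 := ⟨j / 4, by grind⟩
  · simpa [oddEdgeParam, hxj] using hparam i
  · have hprod : x (4 * i + 1) * x (4 * i + 3) = 0 := by
      simpa [loosePathLink_of_even x (v := 4 * i + 2) (by grind)] using hlink (4 * i + 2)
    have hzero : x (4 * i + 1) = 0 := (mul_eq_zero.mp hprod).resolve_right hxj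
    simpa [oddEdgeParam, hxj, hzero] using hparam i

lemma isAlgebraic_of_mul_add_eq_zero {a b c : B} (ha : IsAlgebraic R a) (ha0 : a ≠ 0)
    (hc : IsAlgebraic R c) (h : a * b + c = 0) : IsAlgebraic R b :=
  .of_mul (mem_nonZeroDivisors_of_ne_zero ha0) ha (eq_neg_of_add_eq_zero_left h ▸ hc.neg)

lemma isAlgebraic_of_oddEdgeParam (hlink : ∀ v, loosePathLink x v = 0)
    (hparam : ∀ i, IsAlgebraic R (oddEdgeParam x i)) (heven : ∀ i, IsAlgebraic R (x (4 * i)))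
    (j : ℕ) : IsAlgebraic R (x j) := by
  have spine {j : ℕ} (hj : Odd j) := isAlgebraic_of_odd_of_oddEdgeParam hlink hparam hj
  rcases (Nat.even_or_odd j).symm with hj | hj
  · exact spine hj
  obtain ⟨i, rfl | rfl⟩ : ∃ i, j = 4 * i ∨ j = 4 * i + 2 := ⟨j / 4, by grind⟩
  · exact heven i
  by_cases hleft : x (4 * i + 1) = 0
  · by_cases hright : x (4 * i + 3) = 0
    · simpa [oddEdgeParam, hleft, hright] using hparam i
    · have left_link := hlink (4 * i + 1)
      rw [loosePathLink_of_odd x (by grind)] at left_link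
      rw [Nat.add_sub_cancel] at left_link
      have halg : IsAlgebraic R (x (4 * i + 1 - 2) * x (4 * i)) := by
        rcases i with _ | i
        · exact (heven 0).mul (heven 0)
        · exact (spine (by grind)).mul (heven (i + 1))
      refine isAlgebraic_of_mul_add_eq_zero (spine (by grind)) hright halg ?_
      linear_combination left_link
  · have right_link := hlink (4 * i + 3)
    rw [loosePathLink_of_odd x (by grind)] at right_link
    exact isAlgebraic_of_mul_add_eq_zero (spine (by grind)) hleft
      ((heven (i + 1)).mul (spine (by grind))) right_link

end GenericPoint

lemma trdeg_le_of_loosePathLink_eq_zero (K : Type*) {B : Type*} [CommRing K] [CommRing B]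
    [IsDomain B] [Algebra K B] {n : ℕ} {x : ℕ → B} (hx0 : x 0 = 0)
    (hx : ∀ i, 2 * n + 1 < i → x i = 0) (hlink : ∀ v, loosePathLink x v = 0)
    (hgen : Algebra.adjoin K (Set.range x) = ⊤) :
    Algebra.trdeg K B ≤ (2 * (n / 2) + 1 : ℕ) := by
  let param : Fin (n / 2 + 1) ⊕ Fin (n / 2) → B :=
    Sum.elim (fun i => oddEdgeParam x i) (fun i => x (4 * (i + 1)))
  let S := Algebra.adjoin K (Set.range param)
  have alg_param (k) : IsAlgebraic S (param k) :=
    isAlgebraic_algebraMap (⟨param k, Algebra.subset_adjoin ⟨k, rfl⟩⟩ : S)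
  have alg_odd (i : ℕ) : IsAlgebraic S (oddEdgeParam x i) := by
    by_cases hi : i < n / 2 + 1
    · exact alg_param (.inl ⟨i, hi⟩)
    · simpa [oddEdgeParam, hx (4 * i + 1) (by omega), hx (4 * i + 2) (by omega),
        hx (4 * i + 3) (by omega)] using isAlgebraic_zero
  have alg_even (i : ℕ) : IsAlgebraic S (x (4 * i)) := by
    rcases i with _ | i
    · simpa [hx0] using isAlgebraic_zero
    by_cases hi : i < n / 2
    · exact alg_param (.inr ⟨i, hi⟩)
    · simpa [hx (4 * (i + 1)) (by omega)] using isAlgebraic_zero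
  have alg (b : B) : IsAlgebraic S b := by
    have hle : Algebra.adjoin K (Set.range x) ≤
        (Subalgebra.algebraicClosure S B).restrictScalars K :=
      Algebra.adjoin_le (Set.range_subset_iff.mpr
        (isAlgebraic_of_oddEdgeParam hlink alg_odd alg_even))
    exact hle (hgen ▸ Algebra.mem_top)
  have : Algebra.IsAlgebraic S B := ⟨alg⟩
  calc Algebra.trdeg K B ≤ Cardinal.mk (Set.range param) :=
        Algebra.IsAlgebraic.trdeg_le_cardinalMk K _
    _ ≤ (2 * (n / 2) + 1 : ℕ) := by
        have card_le : Cardinal.mk (Set.range param) ≤ (n / 2 + 1 + n / 2 : ℕ) := by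
          simpa using Cardinal.mk_range_le_lift (f := param)
        exact card_le.trans (by exact_mod_cast (by omega))

/-- The variable `x_i` attached to the vertex `i` of the loose path with `n` edges, extended by zero
to all `i` outside `1 ≤ i ≤ 2n+1` so that the links at the two ends take the general form. -/
noncomputable def loosePathVar (R : Type*) [CommSemiring R] (n i : ℕ) :
    MvPolynomial (Fin (2 * n + 1)) R :=
  if h : 1 ≤ i ∧ i ≤ 2 * n + 1 then X ⟨i - 1, by omega⟩ else 0

/-- The ideal generated by the link polynomials of the loose path with `n` edges. -/
noncomputable def loosePathLinkIdeal (R : Type*) [CommSemiring R] (n : ℕ) :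
    Ideal (MvPolynomial (Fin (2 * n + 1)) R) :=
  Ideal.span (loosePathLink (loosePathVar R n) '' Set.Icc 1 (2 * n + 1))

section LoosePathIdeal

variable {R : Type*} [CommSemiring R] {n : ℕ}

lemma loosePathVar_zero : loosePathVar R n 0 = 0 :=
  dif_neg (by omega)

lemma loosePathVar_of_lt {i : ℕ} (hi : 2 * n + 1 < i) : loosePathVar R n i = 0 :=
  dif_neg (by omega)

lemma loosePathVar_succ (i : Fin (2 * n + 1)) : loosePathVar R n (i + 1) = X i :=
  dif_pos (by omega)

lemma adjoin_range_loosePathVar :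
    Algebra.adjoin R (Set.range (loosePathVar R n)) = ⊤ := by
  rw [eq_top_iff, ← adjoin_range_X]
  refine Algebra.adjoin_mono (Set.range_subset_iff.mpr fun i => ?_)
  exact ⟨i + 1, loosePathVar_succ i⟩

lemma constantCoeff_loosePathVar (i : ℕ) : constantCoeff (loosePathVar R n i) = 0 := by
  unfold loosePathVar
  split_ifs <;> simp

lemma loosePathLink_loosePathVar_mem (v : ℕ) :
    loosePathLink (loosePathVar R n) v ∈ loosePathLinkIdeal R n := by
  by_cases hv : v ∈ Set.Icc 1 (2 * n + 1)
  · exact Ideal.subset_span (Set.mem_image_of_mem _ hv)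
  suffices loosePathLink (loosePathVar R n) v = 0 from this ▸ zero_mem _
  rw [Set.mem_Icc, not_and_or, not_le, Nat.lt_one_iff, not_le] at hv
  rcases hv with rfl | hv
  · rw [loosePathLink_of_even _ .zero, Nat.zero_sub, loosePathVar_zero, zero_mul]
  have succ_zero := loosePathVar_of_lt (R := R) (n := n) (i := v + 1) (by omega)
  rcases Nat.even_or_odd v with even | odd
  · rw [loosePathLink_of_even _ even, succ_zero, mul_zero]
  · rw [loosePathLink_of_odd _ odd, succ_zero, loosePathVar_of_lt (i := v - 1) (by grind),
      mul_zero, zero_mul, add_zero]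

lemma loosePathLinkIdeal_le_span :
    loosePathLinkIdeal R n ≤ Ideal.span
      ((fun i => loosePathVar R n (4 * i + 3)) '' Set.Iio ((n + 1) / 2) ∪
        (fun i => loosePathLink (loosePathVar R n) (4 * i + 3)) '' Set.Iio ((n + 1) / 2)) := by
  rw [loosePathLinkIdeal, Ideal.span_le, Set.image_subset_iff]
  refine fun v _ => loosePathLink_mem_of_mod_four_eq_three ?_ (fun i => ?_) (fun i => ?_) v
  · exact loosePathVar_zero (R := R) (n := n) ▸ zero_mem _
  all_goals by_cases hi : i < (n + 1) / 2
  · exact Ideal.subset_span (.inl ⟨i, hi, rfl⟩)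
  · exact loosePathVar_of_lt (R := R) (n := n) (i := 4 * i + 3) (by omega) ▸ zero_mem _
  · exact Ideal.subset_span (.inr ⟨i, hi, rfl⟩)
  · rw [loosePathLink_of_odd _ (by grind), loosePathVar_of_lt (i := 4 * i + 3 - 1) (by omega),
      loosePathVar_of_lt (i := 4 * i + 3 + 1) (by omega), mul_zero, zero_mul, add_zero]
    exact zero_mem _

end LoosePathIdeal

lemma ringKrullDim_quotient_loosePathLinkIdeal_le (K : Type*) [Field K] (n : ℕ) :
    ringKrullDim (MvPolynomial (Fin (2 * n + 1)) K ⧸ loosePathLinkIdeal K n) ≤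
      (2 * (n / 2) + 1 : ℕ) := by
  refine ringKrullDim_le_of_forall_isPrime_trdeg_quotient_le K fun Q _ => ?_
  let I := loosePathLinkIdeal K n
  let π : MvPolynomial (Fin (2 * n + 1)) K →ₐ[K] (_ ⧸ I) ⧸ Q :=
    (Ideal.Quotient.mkₐ K Q).comp (Ideal.Quotient.mkₐ K I)
  have π_surjective : Function.Surjective π :=
    (Ideal.Quotient.mkₐ_surjective K Q).comp (Ideal.Quotient.mkₐ_surjective K I)
  have π_link (v : ℕ) : loosePathLink (π ∘ loosePathVar K n) v = 0 := by
    rw [← map_loosePathLink, AlgHom.comp_apply, Ideal.Quotient.mkₐ_eq_mk K I,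
      Ideal.Quotient.eq_zero_iff_mem.mpr (loosePathLink_loosePathVar_mem v), map_zero]
  refine trdeg_le_of_loosePathLink_eq_zero K (x := π ∘ loosePathVar K n) ?_ ?_ π_link ?_
  · rw [Function.comp_apply, loosePathVar_zero, map_zero]
  · intro i hi
    rw [Function.comp_apply, loosePathVar_of_lt hi, map_zero]
  · rw [Set.range_comp, ← AlgHom.map_adjoin, adjoin_range_loosePathVar, Algebra.map_top,
      (AlgHom.range_eq_top π).mpr π_surjective]

lemma le_ringKrullDim_quotient_loosePathLinkIdeal (R : Type*) [CommRing R] [IsDomain R]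
    [IsNoetherianRing R] (n : ℕ) :
    (2 * (n / 2) + 1 : ℕ) ≤
      ringKrullDim (MvPolynomial (Fin (2 * n + 1)) R ⧸ loosePathLinkIdeal R n) := by
  let m := (n + 1) / 2
  let equations : Set (MvPolynomial (Fin (2 * n + 1)) R) :=
    (fun i => loosePathVar R n (4 * i + 3)) '' Set.Iio m ∪
      (fun i => loosePathLink (loosePathVar R n) (4 * i + 3)) '' Set.Iio m
  have constantCoeff_eq_zero : ∀ p ∈ equations, constantCoeff p = 0 := by
    rintro _ (⟨i, _, rfl⟩ | ⟨i, _, rfl⟩)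
    · exact constantCoeff_loosePathVar _
    · rw [map_loosePathLink, loosePathLink_of_odd _ (by grind)]
      simp [constantCoeff_loosePathVar]
  have encard_le : equations.encard ≤ (m + m : ℕ) := by
    have encard_Iio : (Set.Iio m).encard = m := by
      rw [← Finset.coe_Iio, Set.encard_coe_eq_coe_finsetCard, Nat.card_Iio]
    rw [Nat.cast_add, ← encard_Iio]
    grw [Set.encard_union_le, Set.encard_image_le, Set.encard_image_le]
  have dim_le : ringKrullDim (MvPolynomial (Fin (2 * n + 1)) R ⧸ Ideal.span equations) ≤
      ringKrullDim (MvPolynomial (Fin (2 * n + 1)) R ⧸ loosePathLinkIdeal R n) :=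
    ringKrullDim_le_of_surjective (Ideal.Quotient.factor loosePathLinkIdeal_le_span)
      (Ideal.Quotient.factor_surjective _)
  refine le_trans (ENat.WithBot.add_le_add_natCast_right_iff (c := m + m).mp ?_) dim_le
  calc ((2 * (n / 2) + 1 : ℕ) + (m + m : ℕ) : WithBot ℕ∞) = Nat.card (Fin (2 * n + 1)) := by
        rw [Nat.card_fin, ← Nat.cast_add]
        congr 1
        omega
    _ ≤ ringKrullDim (MvPolynomial (Fin (2 * n + 1)) R ⧸ Ideal.span equations) +
        equations.encard := natCard_le_ringKrullDim_quotient_span_add_encard constantCoeff_eq_zero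
    _ ≤ ringKrullDim (MvPolynomial (Fin (2 * n + 1)) R ⧸ Ideal.span equations) + (m + m : ℕ) := by
        gcongr
        exact_mod_cast encard_le

lemma xv_eq_loosePathVar {n i : ℕ} (hi : 1 ≤ i) (hi' : i ≤ 2 * n + 1) :
    xv n i = loosePathVar ℂ n i := by
  rw [xv, loosePathVar, dif_pos ⟨hi, hi'⟩]
  congr 2
  exact Nat.mod_eq_of_lt (by omega)

lemma linkSet_eq_image_loosePathLink {n : ℕ} (hn : 1 ≤ n) :
    linkSet n = loosePathLink (loosePathVar ℂ n) '' Set.Icc 1 (2 * n + 1) := by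
  have xv_eq {i : ℕ} (hi : 1 ≤ i) (hi' : i ≤ 2 * n + 1) := xv_eq_loosePathVar hi hi'
  have link_first : loosePathLink (loosePathVar ℂ n) 1 = xv n 2 * xv n 3 := by
    rw [loosePathLink_two_mul_add_one _ 0, loosePathVar_zero, mul_zero, zero_add,
      xv_eq (by omega) (by omega), xv_eq (by omega) (by omega)]
  have link_last : loosePathLink (loosePathVar ℂ n) (2 * n + 1) =
      xv n (2 * n - 1) * xv n (2 * n) := by
    rw [loosePathLink_two_mul_add_one, loosePathVar_of_lt (i := 2 * n + 2) (by omega), zero_mul,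
      add_zero, xv_eq (by omega) (by omega), xv_eq (by omega) (by omega)]
  have link_middle {j : ℕ} (hj : 1 ≤ j ∧ j ≤ n) : loosePathLink (loosePathVar ℂ n) (2 * j) =
      xv n (2 * j - 1) * xv n (2 * j + 1) := by
    rw [loosePathLink_two_mul, xv_eq (by omega) (by omega), xv_eq (by omega) (by omega)]
  have link_spine {j : ℕ} (hj : 1 ≤ j ∧ j ≤ n - 1) :
      loosePathLink (loosePathVar ℂ n) (2 * j + 1) =
        xv n (2 * j - 1) * xv n (2 * j) + xv n (2 * j + 2) * xv n (2 * j + 3) := by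
    rw [loosePathLink_two_mul_add_one, xv_eq (by omega) (by omega), xv_eq (by omega) (by omega),
      xv_eq (by omega) (by omega), xv_eq (by omega) (by omega)]
  refine Set.Subset.antisymm ?_ ?_
  · rintro _ (((rfl | rfl) | ⟨j, hj, rfl⟩) | ⟨j, hj, rfl⟩)
    · exact ⟨1, by grind, link_first⟩
    · exact ⟨2 * n + 1, by grind, link_last⟩
    · exact ⟨2 * j, by grind, link_middle hj⟩
    · exact ⟨2 * j + 1, by grind, link_spine hj⟩
  · rintro _ ⟨v, ⟨hv, hv'⟩, rfl⟩
    obtain ⟨j, rfl | rfl⟩ : ∃ j, v = 2 * j ∨ v = 2 * j + 1 := ⟨v / 2, by omega⟩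
    · exact .inl (.inr ⟨j, by grind, (link_middle (by omega)).symm⟩)
    obtain rfl | rfl | hj : j = 0 ∨ j = n ∨ 1 ≤ j ∧ j ≤ n - 1 := by omega
    · exact .inl (.inl (.inl link_first))
    · exact .inl (.inl (.inr link_last))
    · exact .inr ⟨j, hj, (link_spine hj).symm⟩

theorem nullvariety_dim_general (K : Type*) [Field K] (n : ℕ) :
    ringKrullDim (MvPolynomial (Fin (2 * n + 1)) K ⧸ loosePathLinkIdeal K n) =
      (2 * (n / 2) + 1 : ℕ) :=
  le_antisymm (ringKrullDim_quotient_loosePathLinkIdeal_le K n)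
    (le_ringKrullDim_quotient_loosePathLinkIdeal K n)

/-- For every `n ≥ 3`, the Krull dimension of `ℂ[x₁,…,x_{2n+1}]/I`, where `I` is the
ideal generated by the `2n+1` link polynomials of `P_n^3`, equals `2⌊n/2⌋ + 1`;
i.e. the nullvariety of `P_n^3` has dimension `2⌊n/2⌋ + 1`. -/
theorem nullvariety_dim (n : ℕ) (hn : 3 ≤ n) :
    ringKrullDim (MvPolynomial (Fin (2 * n + 1)) ℂ ⧸ Ideal.span (linkSet n)) =
      (2 * (n / 2) + 1 : ℕ) := by
  rw [linkSet_eq_image_loosePathLink (by omega)]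
  exact nullvariety_dim_general ℂ n
end
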